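/- arXiv:1905.10512 — 3 statements merged into one kernel-verified Lean document; each statement's English description precedes it below -/
import Mathlib

section
/- Let G be a nilpotent permutation group of degree n (i.e., a nilpotent subgroup of the symmetric group on n points) and let p be the smallest prime divisor of |G|. Then |G| ≤ (p^(1/(p-1)))^(n-1). -/
open MulAction in
theorem nonempty_quotient_orbit {G X : Type*} [Group G] [MulAction G X]
    (ω : orbitRel.Quotient G X) : ω.orbit.Nonempty := by
  induction ω using Quotient.inductionOn' with
  | h x => exact ⟨x, orbitRel.Quotient.mem_orbit.2 rfl⟩

open MulAction in
theorem index_toPermHom_ker_le_prod_orbits {G X : Type*} [Group G] [MulAction G X] [Finite X] :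
    (toPermHom G X).ker.index ≤
      ∏ᶠ ω : orbitRel.Quotient G X, (toPermHom G ω.orbit).ker.index := by
  classical
  have := Fintype.ofFinite (orbitRel.Quotient G X)
  have key : (toPermHom G X).ker = ⨅ ω : orbitRel.Quotient G X, (toPermHom G ω.orbit).ker := by
    ext g
    simp only [MonoidHom.mem_ker, Subgroup.mem_iInf, Equiv.ext_iff, toPermHom_apply,
      toPerm_apply, Equiv.Perm.coe_one, id_eq]
    refine ⟨fun h ω x => Subtype.ext (h x), fun h x => ?_⟩
    exact congrArg Subtype.val (h (Quotient.mk'' x) ⟨x, orbitRel.Quotient.mem_orbit.2 rfl⟩)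
  rw [key, finprod_eq_prod_of_fintype]
  exact Subgroup.index_iInf_le _

open MulAction in
/-- If the bound `c ^ (|X| - 1)` holds on each orbit, it holds on `X` with the number of orbits
in place of `1`. -/
theorem index_toPermHom_ker_le_of_orbits {G X : Type*} [Group G] [MulAction G X] [Finite X]
    {c : ℝ} (h : ∀ ω : orbitRel.Quotient G X,
      ((toPermHom G ω.orbit).ker.index : ℝ) ≤ c ^ (Nat.card ω.orbit - 1)) :
    ((toPermHom G X).ker.index : ℝ) ≤
      c ^ (Nat.card X - Nat.card (orbitRel.Quotient G X)) := by
  classical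
  have := Fintype.ofFinite (orbitRel.Quotient G X)
  have hcard : ∑ ω : orbitRel.Quotient G X, (Nat.card ω.orbit - 1) =
      Nat.card X - Nat.card (orbitRel.Quotient G X) := by
    have hpos : ∀ ω : orbitRel.Quotient G X, 1 ≤ Nat.card ω.orbit := fun ω =>
      have := (nonempty_quotient_orbit ω).to_subtype
      Nat.card_pos
    rw [Finset.sum_tsub_distrib _ fun ω _ => hpos ω,
      Nat.card_congr (selfEquivSigmaOrbits' G X), Nat.card_sigma]
    simp
  calc ((toPermHom G X).ker.index : ℝ)
      ≤ ∏ ω : orbitRel.Quotient G X, ((toPermHom G ω.orbit).ker.index : ℝ) := by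
        exact_mod_cast finprod_eq_prod_of_fintype
          (fun ω : orbitRel.Quotient G X => (toPermHom G ω.orbit).ker.index) ▸
          index_toPermHom_ker_le_prod_orbits
    _ ≤ ∏ ω : orbitRel.Quotient G X, c ^ (Nat.card ω.orbit - 1) :=
        Finset.prod_le_prod (fun _ _ => Nat.cast_nonneg _) fun ω _ => h ω
    _ = _ := by rw [Finset.prod_pow_eq_pow_sum, hcard]

open MulAction in
/-- A normal subgroup containing a point stabilizer has at least as many orbits as its index. -/
theorem index_le_card_orbits_of_stabilizer_le {G X : Type*} [Group G] [MulAction G X] [Finite X]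
    (M : Subgroup G) [M.Normal] (x : X) (hx : stabilizer G x ≤ M) :
    M.index ≤ Nat.card (orbitRel.Quotient M X) := by
  refine Nat.card_le_card_of_injective
    (fun a : G ⧸ M => (Quotient.mk'' (a.out • x) : orbitRel.Quotient M X)) fun a b hab => ?_
  obtain ⟨m, hm⟩ : a.out • x ∈ orbit M (b.out • x) := orbitRel_apply.1 (Quotient.eq''.1 hab)
  have hm' : (m : G) • b.out • x = a.out • x := hm
  have h1 : (a.out)⁻¹ * ((m : G) * b.out) ∈ M := hx <| by
    rw [mem_stabilizer_iff, mul_smul, mul_smul, hm', inv_smul_smul]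
  have h2 : (b.out)⁻¹ * (m : G)⁻¹ * b.out ∈ M := by
    simpa using ‹M.Normal›.conj_mem _ (M.inv_mem m.2) (b.out)⁻¹
  rw [← QuotientGroup.out_eq' a, ← QuotientGroup.out_eq' b, QuotientGroup.eq]
  simpa [mul_assoc] using M.mul_mem h1 h2

open MulAction in
/-- A finite nilpotent group acting on `X` with `k` orbits induces at most `c ^ (|X| - k)`
permutations, if `d ≤ c ^ (d - 1)` for all divisors `d` of its order. -/
theorem index_toPermHom_ker_le_of_isNilpotent {c : ℝ} (hc : 1 ≤ c) {G X : Type*} [Group G]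
    [Finite G] [Group.IsNilpotent G] [MulAction G X] [Finite X]
    (hd : ∀ d : ℕ, d ∣ Nat.card G → (d : ℝ) ≤ c ^ (d - 1)) :
    ((toPermHom G X).ker.index : ℝ) ≤
      c ^ (Nat.card X - Nat.card (orbitRel.Quotient G X)) := by
  induction hN : Nat.card G using Nat.strong_induction_on generalizing G X with
  | _ N ih =>
  refine index_toPermHom_ker_le_of_orbits fun ω => ?_
  obtain ⟨x, hx⟩ := (nonempty_quotient_orbit ω)
  obtain htop | ⟨M, hM, hle⟩ :=
    eq_top_or_exists_le_coatom (stabilizer G (⟨x, hx⟩ : ω.orbit))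
  · have hker : (toPermHom G ω.orbit).ker = ⊤ := by
      refine eq_top_iff.2 fun g _ => ?_
      rw [MonoidHom.mem_ker]
      ext1 y
      obtain ⟨k, rfl⟩ := exists_smul_eq G (⟨x, hx⟩ : ω.orbit) y
      have hfix : ∀ h : G, h • (⟨x, hx⟩ : ω.orbit) = ⟨x, hx⟩ := fun h =>
        mem_stabilizer_iff.1 (htop ▸ Subgroup.mem_top h)
      change g • k • (⟨x, hx⟩ : ω.orbit) = k • (⟨x, hx⟩ : ω.orbit)
      rw [hfix, hfix]
    simpa [hker] using one_le_pow₀ hc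
  · have : M.Normal := Subgroup.NormalizerCondition.normal_of_coatom M Group.normalizerCondition_of_isNilpotent hM
    have hlt : Nat.card M < N := by
      rw [← hN]
      refine lt_of_le_of_ne M.card_le_card_group fun h => hM.1 (M.card_eq_iff_eq_top.1 h)
    have hMX := ih _ hlt (G := M) (X := ω.orbit)
      (fun d h => hd d (h.trans M.card_subgroup_dvd_card)) rfl
    have horb := index_le_card_orbits_of_stabilizer_le M _ hle
    have hidx' : M.index ≤ Nat.card ω.orbit :=
      horb.trans (Nat.card_le_card_of_surjective _ Quotient.mk''_surjective)
    have hidx : 1 ≤ M.index := Nat.pos_of_ne_zero M.index_ne_zero_of_finite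
    have hker : (toPermHom M ω.orbit).ker = (toPermHom G ω.orbit).ker.subgroupOf M := rfl
    have hmul : (toPermHom G ω.orbit).ker.index ≤ (toPermHom M ω.orbit).ker.index * M.index := by
      rw [hker]
      change _ ≤ (toPermHom G ω.orbit).ker.relIndex M * M.index
      rw [← Subgroup.inf_relIndex_right, Subgroup.relIndex_mul_index inf_le_right]
      exact Nat.le_of_dvd (Nat.pos_of_ne_zero (Subgroup.index_ne_zero_of_finite))
        (Subgroup.index_dvd_of_le inf_le_left)
    calc ((toPermHom G ω.orbit).ker.index : ℝ)
        ≤ (toPermHom M ω.orbit).ker.index * M.index := by exact_mod_cast hmul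
      _ ≤ c ^ (Nat.card ω.orbit - M.index) * c ^ (M.index - 1) := by
          refine mul_le_mul (hMX.trans (pow_le_pow_right₀ hc ?_)) (hd _ M.index_dvd_card)
            (Nat.cast_nonneg _) (by positivity)
          exact Nat.sub_le_sub_left horb _
      _ = c ^ (Nat.card ω.orbit - 1) := by
          rw [← pow_add]
          congr 1
          omega

theorem le_rpow_one_div_pow {p d : ℕ} (hp : 2 ≤ p) (hpd : p ≤ d) :
    (d : ℝ) ≤ ((p : ℝ) ^ ((1 : ℝ) / ((p : ℝ) - 1))) ^ (d - 1) := by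
  have hp' : (2 : ℝ) ≤ p := by exact_mod_cast hp
  have hpd' : (p : ℝ) ≤ d := by exact_mod_cast hpd
  have hpos : (0 : ℝ) < p - 1 := by linarith
  have h := one_add_mul_self_le_rpow_one_add (s := (p : ℝ) - 1) (p := ((d : ℝ) - 1) / (p - 1))
    (by linarith) (by rw [le_div_iff₀ hpos]; linarith)
  rw [div_mul_cancel₀ _ hpos.ne', add_sub_cancel, add_sub_cancel] at h
  rw [← Real.rpow_mul_natCast (by positivity), Nat.cast_sub (by omega), Nat.cast_one,
    one_div_mul_eq_div]
  exact h

/-- A nilpotent permutation group of degree `n` with smallest prime divisor `p` of its order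
has order at most `(p^(1/(p-1)))^(n-1)`. -/
theorem nilpotent_perm_group_card_le (n : ℕ) (G : Subgroup (Equiv.Perm (Fin n)))
    (hnil : Group.IsNilpotent G) (hG : 1 < Nat.card G)
    (p : ℕ) (hp : p = (Nat.card G).minFac) :
    (Nat.card G : ℝ) ≤ ((p : ℝ) ^ ((1 : ℝ) / ((p : ℝ) - 1))) ^ (n - 1) := by
  have hp2 : 2 ≤ p := hp ▸ (Nat.minFac_prime hG.ne').two_le
  have hp' : (2 : ℝ) ≤ p := by exact_mod_cast hp2
  have hc : 1 ≤ (p : ℝ) ^ ((1 : ℝ) / ((p : ℝ) - 1)) :=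
    Real.one_le_rpow (by linarith) (one_div_nonneg.2 (by linarith))
  have hd : ∀ d : ℕ, d ∣ Nat.card G →
      (d : ℝ) ≤ ((p : ℝ) ^ ((1 : ℝ) / ((p : ℝ) - 1))) ^ (d - 1) := by
    intro d hdvd
    have hd0 : 0 < d := Nat.pos_of_dvd_of_pos hdvd (by omega)
    obtain rfl | h1 : d = 1 ∨ 2 ≤ d := by omega
    · simp
    · exact le_rpow_one_div_pow hp2 (hp ▸ Nat.minFac_le_of_dvd h1 hdvd)
  have h := index_toPermHom_ker_le_of_isNilpotent hc (X := Fin n) hd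
  have hker : (MulAction.toPermHom G (Fin n)).ker = ⊥ :=
    (MonoidHom.ker_eq_bot_iff _).2 MulAction.toPerm_injective
  rw [hker, Subgroup.index_bot, Nat.card_fin] at h
  refine h.trans (pow_le_pow_right₀ hc ?_)
  obtain rfl | hn := Nat.eq_zero_or_pos n
  · simp
  · have : Nonempty (MulAction.orbitRel.Quotient G (Fin n)) := ⟨Quotient.mk'' ⟨0, hn⟩⟩
    exact Nat.sub_le_sub_left Nat.card_pos _
end

section
/- Let N be a nontrivial nilpotent π-group acting faithfully (by automorphisms) on a π'-group H, where π is a set of primes and p is the smallest member of π. Then there exists x ∈ H with |C_N(x)| ≤ (|N|/p)^(1/p). -/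
open MulAction Subgroup

universe v

/-- Every subgroup `M` lies in `K` or meets some member of `𝒮` in a subgroup which is small
compared to the index of `M ⊓ K` in `M`. -/
def HasSmallMeets {G : Type*} [Group G] (p : ℕ) (K : Subgroup G) (𝒮 : Set (Subgroup G)) : Prop :=
  ∀ M : Subgroup G, M ≤ K ∨
    ∃ S ∈ 𝒮, p * Nat.card ↥(M ⊓ S) ^ p ≤ Nat.card M * Nat.card ↥(M ⊓ K) ^ (p - 1)

theorem Subgroup.card_mul_card_le_of_le {G : Type*} [Group G] [Finite G] {C K S : Subgroup G}
    (hKC : K ≤ C) :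
    Nat.card ↥(C ⊓ S) * Nat.card K ≤ Nat.card C * Nat.card ↥(K ⊓ S) := by
  have h1 : (K ⊓ S).relIndex (C ⊓ S) ≤ K.relIndex C := by
    have : K ⊓ S = K ⊓ (C ⊓ S) := by
      rw [← inf_assoc, inf_eq_left.mpr hKC]
    rw [this, inf_relIndex_right]
    exact relIndex_le_of_le_right inf_le_left (by
      rw [relIndex]; exact FiniteIndex.index_ne_zero)
  have h2 := relIndex_mul_relIndex ⊥ K C bot_le hKC
  have h3 := relIndex_mul_relIndex ⊥ (K ⊓ S) (C ⊓ S) bot_le (inf_le_inf_right S hKC)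
  simp only [relIndex_bot_left] at h2 h3
  rw [← h2, ← h3]
  nlinarith [Nat.mul_le_mul_right (Nat.card ↥(K ⊓ S) * Nat.card K) h1]

theorem exists_small_inf_of_hasSmallMeets {G ι : Type*} [Group G] [Finite G] [DecidableEq ι]
    {p : ℕ} (hp : 0 < p)
    {K : ι → Subgroup G} {𝒮 : ι → Set (Subgroup G)} (hS : ∀ i, (𝒮 i).Nonempty)
    (hK : ∀ i, ∀ S ∈ 𝒮 i, K i ≤ S)
    (h : ∀ i, HasSmallMeets p (K i) (𝒮 i)) (s : Finset ι) :
    ∃ (S : ι → Subgroup G) (t : ℕ), (∀ i, S i ∈ 𝒮 i) ∧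
      Nat.card ↥(s.inf S) ^ p * p ^ t ≤ Nat.card G * Nat.card ↥(s.inf K) ^ (p - 1) ∧
      (t < s.card → ∃ i ∈ s, (s.erase i).inf K ≤ K i) ∧ (t = 0 → s.inf K = ⊤) ∧ t ≤ s.card := by
  induction s using Finset.induction_on with
  | empty =>
    choose S hS using hS
    refine ⟨S, 0, hS, ?_, by simp, by simp, by simp⟩
    simp only [Finset.inf_empty, pow_zero, mul_one]
    rw [Subgroup.card_top, ← pow_succ', Nat.sub_add_cancel hp]
  | insert a s ha ih =>
    obtain ⟨S, t, hS', hle, ht, ht0, hts⟩ := ih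
    rcases h a (s.inf K) with hKa | ⟨T, hT, hTle⟩
    · have e : (insert a s).inf K = s.inf K := by
        rw [Finset.inf_insert, inf_eq_right.mpr hKa]
      refine ⟨S, t, hS', ?_, fun _ => ⟨a, by simp, ?_⟩, fun h0 => by rw [e, ht0 h0], ?_⟩
      · rw [e]
        refine le_trans ?_ hle
        gcongr
        exact Subgroup.card_le_of_le (Finset.inf_mono (Finset.subset_insert a s))
      · rwa [Finset.erase_insert ha]
      · rw [Finset.card_insert_of_notMem ha]; omega
    · have hne : ∀ i ∈ s, i ≠ a := fun i hi h => ha (h ▸ hi)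
      set S' := Function.update S a T with hS'def
      have e1 : (insert a s).inf S' = s.inf S ⊓ T := by
        rw [Finset.inf_insert, inf_comm]
        congr 1
        · exact Finset.inf_congr rfl fun i hi => by simp [S', hne i hi]
        · simp [S']
      have e2 : (insert a s).inf K = s.inf K ⊓ K a := by
        rw [Finset.inf_insert, inf_comm]
      have hKS : s.inf K ≤ s.inf S := Finset.inf_mono_fun fun i _ => hK i _ (hS' i)
      have key := Subgroup.card_mul_card_le_of_le (S := T) hKS
      refine ⟨S', t + 1, ?_, ?_, ?_, by simp, ?_⟩
      · intro i
        by_cases hi : i = a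
        · subst hi; simpa [S'] using hT
        · simpa [S', hi] using hS' i
      · rw [e1, e2]
        have hpos : 0 < Nat.card ↥(s.inf K) := Nat.card_pos
        set k := Nat.card ↥(s.inf K)
        set c := Nat.card ↥(s.inf S)
        set d := Nat.card ↥(s.inf S ⊓ T)
        set b := Nat.card ↥(s.inf K ⊓ T)
        set l := Nat.card ↥(s.inf K ⊓ K a)
        refine Nat.le_of_mul_le_mul_right ?_ (pow_pos hpos p)
        calc d ^ p * p ^ (t + 1) * k ^ p = (d * k) ^ p * p ^ (t + 1) := by rw [mul_pow]; ring
          _ ≤ (c * b) ^ p * p ^ (t + 1) := by gcongr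
          _ = (c ^ p * p ^ t) * (p * b ^ p) := by rw [mul_pow]; ring
          _ ≤ (Nat.card G * k ^ (p - 1)) * (k * l ^ (p - 1)) := Nat.mul_le_mul hle hTle
          _ = Nat.card G * l ^ (p - 1) * (k ^ (p - 1) * k) := by ring
          _ = _ := by rw [← pow_succ, Nat.sub_add_cancel hp]
      · intro hlt
        rw [Finset.card_insert_of_notMem ha] at hlt
        obtain ⟨i, hi, hle⟩ := ht (by omega)
        refine ⟨i, by simp [hi], le_trans (Finset.inf_mono ?_) hle⟩
        exact Finset.erase_subset_erase _ (Finset.subset_insert _ _)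
      · rw [Finset.card_insert_of_notMem ha]; omega

theorem exists_small_iInf_of_hasSmallMeets {G ι : Type*} [Group G] [Finite G] [Nontrivial G]
    [Finite ι] {p : ℕ} (hp : 0 < p)
    {K : ι → Subgroup G} {𝒮 : ι → Set (Subgroup G)} (hS : ∀ i, (𝒮 i).Nonempty)
    (hK : ∀ i, ∀ S ∈ 𝒮 i, K i ≤ S)
    (h : ∀ i, HasSmallMeets p (K i) (𝒮 i)) (hbot : ⨅ i, K i = ⊥) :
    ∃ S : ι → Subgroup G, (∀ i, S i ∈ 𝒮 i) ∧ p * Nat.card ↥(⨅ i, S i) ^ p ≤ Nat.card G := by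
  classical
  have := Fintype.ofFinite ι
  obtain ⟨S, t, hS', hle, -, ht0, -⟩ := exists_small_inf_of_hasSmallMeets hp hS hK h Finset.univ
  rw [Finset.inf_univ_eq_iInf, Finset.inf_univ_eq_iInf, hbot] at hle
  rw [Finset.inf_univ_eq_iInf, hbot] at ht0
  refine ⟨S, hS', ?_⟩
  have ht : t ≠ 0 := fun h0 => bot_ne_top (ht0 h0)
  simp only [Subgroup.card_bot, one_pow, mul_one] at hle
  refine le_trans ?_ hle
  rw [mul_comm]
  gcongr
  exact le_self_pow₀ hp ht

theorem Nat.pow_sub_one_le_pow_sub_one {p r : ℕ} (hp : 2 ≤ p) (hpr : p ≤ r) :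
    r ^ (p - 1) ≤ p ^ (r - 1) := by
  have hp0 : (0 : ℝ) < p := by positivity
  have hr0 : (0 : ℝ) < r := by
    have : 0 < r := by omega
    positivity
  have h1 : (p : ℝ) - 1 ≤ p * Real.log p := by
    have := Real.one_sub_inv_le_log_of_pos hp0
    have := mul_le_mul_of_nonneg_left this hp0.le
    rwa [mul_sub, mul_inv_cancel₀ hp0.ne', mul_one] at this
  have h2 : Real.log r - Real.log p ≤ r / p - 1 := by
    rw [← Real.log_div hr0.ne' hp0.ne']
    exact Real.log_le_sub_one_of_pos (by positivity)
  have h3 : ((p : ℝ) - 1) * Real.log r ≤ (r - 1) * Real.log p := by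
    have hp2 : (2 : ℝ) ≤ p := by exact_mod_cast hp
    have hrp : (p : ℝ) ≤ r := by exact_mod_cast hpr
    have h4 : ((p : ℝ) - 1) * (Real.log r - Real.log p) ≤ (p - 1) * (r / p - 1) :=
      mul_le_mul_of_nonneg_left h2 (by linarith)
    have h5 : ((p : ℝ) - 1) * (r / p - 1) ≤ p * Real.log p * (r / p - 1) :=
      mul_le_mul_of_nonneg_right h1 (by rw [sub_nonneg, le_div_iff₀ hp0]; linarith)
    have h6 : p * Real.log p * (r / p - 1) = (r - p) * Real.log p := by
      field_simp
    linarith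
  have h7 : (r : ℝ) ^ (p - 1) ≤ (p : ℝ) ^ (r - 1) := by
    rw [← Real.log_le_log_iff (by positivity) (by positivity), Real.log_pow, Real.log_pow,
      Nat.cast_sub (by omega), Nat.cast_sub (by omega)]
    simpa using h3
  exact_mod_cast h7

theorem IsPGroup.exists_mem_fixed_of_not_dvd_ncard {P X : Type*} [Group P] [MulAction P X]
    {r : ℕ} [Fact r.Prime] (hP : IsPGroup r P) {S : Set X}
    (hS : ∀ g : P, ∀ x ∈ S, g • x ∈ S) (hr : ¬ r ∣ S.ncard) :
    ∃ x ∈ S, ∀ g : P, g • x = x := by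
  let _ : MulAction P S :=
    { smul := fun g x => ⟨g • x.1, hS g x.1 x.2⟩
      one_smul := fun x => Subtype.ext (one_smul P x.1)
      mul_smul := fun g h x => Subtype.ext (mul_smul g h x.1) }
  obtain ⟨x, hx⟩ := hP.nonempty_fixed_point_of_prime_not_dvd_card S (by
    rwa [Nat.card_coe_set_eq])
  exact ⟨x.1, x.2, fun g => congrArg Subtype.val (hx g)⟩

theorem MulAction.ncard_dvd_card_of_transitive {K X : Type*} [Group K] [Finite K] [MulAction K X]
    {K' : Subgroup K} {S : Set X} {x : X} (hx : x ∈ S)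
    (hKS : ∀ k ∈ K', ∀ x ∈ S, k • x ∈ S) (htrans : ∀ x ∈ S, ∀ y ∈ S, ∃ k ∈ K', k • x = y) :
    S.ncard ∣ Nat.card K' := by
  have h : orbit K' x = S := by
    ext y
    constructor
    · rintro ⟨k, rfl⟩
      exact hKS k k.2 x hx
    · intro hy
      obtain ⟨k, hk, rfl⟩ := htrans x hx y hy
      exact ⟨⟨k, hk⟩, rfl⟩
  rw [← h, ← index_stabilizer]
  exact index_dvd_card _

/-- **Glauberman's lemma**, existence of a fixed point, for a nilpotent group of operators. -/
theorem exists_fixed_of_coprime_of_transitive {K X : Type*} [Group K] [Finite K] [MulAction K X]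
    (n : ℕ) : ∀ (U : Type v) [Group U] [Finite U] [Group.IsNilpotent U] [MulDistribMulAction U K]
      [MulAction U X] (_ : Nat.card U = n)
      (_ : ∀ (u : U) (k : K) (x : X), u • k • x = (u • k) • u • x)
      (K' : Subgroup K) (S : Set X) (_ : ∀ u : U, ∀ k ∈ K', u • k ∈ K')
      (_ : ∀ u : U, ∀ x ∈ S, u • x ∈ S) (_ : ∀ k ∈ K', ∀ x ∈ S, k • x ∈ S)
      (_ : ∀ x ∈ S, ∀ y ∈ S, ∃ k ∈ K', k • x = y)
      (_ : (Nat.card U).Coprime (Nat.card K')) (_ : S.Nonempty),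
      ∃ x ∈ S, ∀ u : U, u • x = x := by
  induction n using Nat.strong_induction_on with
  | _ n ih =>
  intro U _ _ _ _ _ hn hcompat K' S hUK hUS hKS htrans hco hne
  by_cases h1 : Nat.card U = 1
  · obtain ⟨x, hx⟩ := hne
    have := (Nat.card_eq_one_iff_unique.mp h1).1
    exact ⟨x, hx, fun u => by rw [Subsingleton.elim u 1, one_smul]⟩
  obtain ⟨r, hr, hrU⟩ := Nat.exists_prime_and_dvd h1
  have : Fact r.Prime := ⟨hr⟩
  have hrK : ¬ r ∣ Nat.card K' := fun h =>
    hr.one_lt.ne' (Nat.dvd_one.mp (hco ▸ Nat.dvd_gcd hrU h))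
  let P : Sylow r U := default
  obtain ⟨R, hR⟩ := exists_right_complement'_of_coprime P.card_coprime_index
  have hPne : 1 < Nat.card P := by
    have := P.dvd_card_of_dvd_card hrU
    exact hr.one_lt.trans_le (Nat.le_of_dvd Nat.card_pos this)
  have hcard := hR.card_mul_card
  have hlt : Nat.card R < n := by
    rw [← hn, ← hcard]
    exact lt_mul_left Nat.card_pos hPne
  have hmem : ∀ u : U, ∀ g ∈ P, u⁻¹ * g * u ∈ P := fun u g hg => by
    have hPn : (P : Subgroup U).Normal := inferInstance
    have h := hPn.conj_mem g hg u⁻¹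
    rwa [inv_inv] at h
  -- fixed points of `P` in `K'` and in `S`
  let K₁ : Subgroup K :=
    { carrier := {k | k ∈ K' ∧ ∀ g ∈ P, g • k = k}
      one_mem' := ⟨one_mem _, fun g _ => smul_one g⟩
      mul_mem' := fun {a b} ha hb =>
        ⟨mul_mem ha.1 hb.1, fun g hg => by rw [smul_mul', ha.2 g hg, hb.2 g hg]⟩
      inv_mem' := fun {a} ha => ⟨inv_mem ha.1, fun g hg => by rw [smul_inv', ha.2 g hg]⟩ }
  have hK₁ : K₁ ≤ K' := fun k hk => hk.1
  let S₁ : Set X := {x | x ∈ S ∧ ∀ g ∈ P, g • x = x}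
  have hS₁ : S₁.Nonempty := by
    obtain ⟨x, hx⟩ := hne
    obtain ⟨y, hy, hfix⟩ := P.2.exists_mem_fixed_of_not_dvd_ncard (S := S)
      (fun g x hx => hUS g x hx)
      (fun h => hrK (h.trans (ncard_dvd_card_of_transitive hx hKS htrans)))
    exact ⟨y, hy, fun g hg => hfix ⟨g, hg⟩⟩
  have htrans₁ : ∀ x ∈ S₁, ∀ y ∈ S₁, ∃ k ∈ K₁, k • x = y := by
    intro x hx y hy
    let T : Set K := {k | k ∈ K' ∧ k • x = y}
    obtain ⟨k₀, hk₀, hk₀x⟩ := htrans x hx.1 y hy.1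
    have hT : T.ncard ∣ Nat.card ↥(K' ⊓ stabilizer K y) := by
      refine ncard_dvd_card_of_transitive (X := K) (x := k₀) ⟨hk₀, hk₀x⟩ ?_ ?_
      · rintro k ⟨hk, hky⟩ t ⟨ht, htx⟩
        exact ⟨mul_mem hk ht, by rw [smul_eq_mul, mul_smul, htx]; exact hky⟩
      · rintro a ⟨ha, hax⟩ b ⟨hb, hbx⟩
        refine ⟨b * a⁻¹, mem_inf.mpr ⟨mul_mem hb (inv_mem ha), ?_⟩, by simp⟩
        rw [mem_stabilizer_iff, mul_smul, ← hax, inv_smul_smul, hbx, hax]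
    obtain ⟨k, ⟨hk, hkx⟩, hfix⟩ := P.2.exists_mem_fixed_of_not_dvd_ncard (S := T)
      (fun g k hk => ⟨hUK g k hk.1, by
        have := hcompat g k x
        rw [hk.2] at this
        change g.1 • y = _ at this
        rw [hy.2 g g.2] at this
        change y = (g.1 • k) • g.1 • x at this
        rw [hx.2 g g.2] at this
        exact this.symm⟩)
      (fun h => hrK (h.trans (hT.trans (card_dvd_of_le inf_le_left))))
    exact ⟨k, ⟨hk, fun g hg => hfix ⟨g, hg⟩⟩, hkx⟩
  obtain ⟨x, hx, hRx⟩ := ih (Nat.card R) hlt R rfl (fun u k x => hcompat u k x) K₁ S₁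
    (fun u k hk => ⟨hUK u k hk.1, fun g hg => by
      have := hk.2 _ (hmem u g hg)
      rw [mul_smul, mul_smul, inv_smul_eq_iff] at this
      exact this⟩)
    (fun u x hx => ⟨hUS u x hx.1, fun g hg => by
      have := hx.2 _ (hmem u g hg)
      rw [mul_smul, mul_smul, inv_smul_eq_iff] at this
      exact this⟩)
    (fun k hk x hx => ⟨hKS k hk.1 x hx.1, fun g hg => by
      rw [hcompat, hk.2 g hg, hx.2 g hg]⟩)
    htrans₁
    ((hco.coprime_dvd_left (Subgroup.card_subgroup_dvd_card R)).coprime_dvd_right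
      (card_dvd_of_le hK₁)) hS₁
  refine ⟨x, hx.1, fun u => ?_⟩
  obtain ⟨⟨g, ρ⟩, rfl⟩ := hR.2 u
  change ((g : U) * (ρ : U)) • x = x
  rw [mul_smul, show (ρ : U) • x = x from hRx ρ, hx.2 g g.2]

/-- **Glauberman's lemma**: over a nilpotent group of operators of coprime order, the fixed points
of `K` act transitively on the fixed points of a transitive `K`-set. -/
theorem exists_fixed_smul_eq_of_coprime {U : Type v} {K X : Type*} [Group K] [Finite K]
    [MulAction K X] [Group U] [Finite U] [Group.IsNilpotent U] [MulDistribMulAction U K]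
    [MulAction U X] (hcompat : ∀ (u : U) (k : K) (x : X), u • k • x = (u • k) • u • x)
    [IsPretransitive K X] (hco : (Nat.card U).Coprime (Nat.card K)) {x y : X}
    (hx : ∀ u : U, u • x = x) (hy : ∀ u : U, u • y = y) :
    ∃ k : K, (∀ u : U, u • k = k) ∧ k • x = y := by
  have hstab : ∀ u : U, ∀ k ∈ stabilizer K y, u • k ∈ stabilizer K y := fun u k hk => by
    have := hcompat u k y
    rw [mem_stabilizer_iff.mp hk, hy u] at this
    exact this.symm
  obtain ⟨k₀, hk₀⟩ := exists_smul_eq K x y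
  obtain ⟨k, hk, hfix⟩ := exists_fixed_of_coprime_of_transitive (K := K) (X := K) _ U rfl
    (fun u k x => smul_mul' u k x) (stabilizer K y) {k | k • x = y} hstab
    (fun u k hk => by
      have := hcompat u k x
      rw [show k • x = y from hk, hy u, hx u] at this
      exact this.symm)
    (fun k hk t ht => by
      change (k * t) • x = y
      rw [mul_smul, show t • x = y from ht]; exact hk)
    (fun a ha b hb => ⟨b * a⁻¹, by
      rw [mem_stabilizer_iff, mul_smul, ← show a • x = y from ha, inv_smul_smul]
      exact (show b • x = y from hb).trans (show a • x = y from ha).symm, by simp⟩)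
    (hco.coprime_dvd_right (card_subgroup_dvd_card _)) ⟨k₀, hk₀⟩
  exact ⟨k, hfix, hk⟩

/-- The action on a subgroup stable under the operators. -/
abbrev Subgroup.mulDistribMulActionOfStable {G H : Type*} [Group G] [Group H]
    [MulDistribMulAction G H] (K : Subgroup H) (hK : ∀ g : G, ∀ k ∈ K, g • k ∈ K) :
    MulDistribMulAction G K where
  smul g k := ⟨g • k.1, hK g k.1 k.2⟩
  one_smul k := Subtype.ext (one_smul G k.1)
  mul_smul g h k := Subtype.ext (mul_smul g h k.1)
  smul_mul g k l := Subtype.ext (smul_mul' g k.1 l.1)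
  smul_one g := Subtype.ext (smul_one g)

/-- The action on the quotient by a normal subgroup stable under the operators. -/
abbrev Subgroup.mulDistribMulActionQuotient {G H : Type*} [Group G] [Group H]
    [MulDistribMulAction G H] (K : Subgroup H) [K.Normal] (hK : ∀ g : G, ∀ k ∈ K, g • k ∈ K) :
    MulDistribMulAction G (H ⧸ K) where
  smul g := QuotientGroup.map K K (MulDistribMulAction.toMonoidHom H g) (hK g)
  one_smul x := by
    induction x using QuotientGroup.induction_on with
    | H x => exact congrArg QuotientGroup.mk (one_smul G x)
  mul_smul g h x := by
    induction x using QuotientGroup.induction_on with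
    | H x => exact congrArg QuotientGroup.mk (mul_smul g h x)
  smul_mul g := map_mul (QuotientGroup.map K K (MulDistribMulAction.toMonoidHom H g) (hK g))
  smul_one g := map_one (QuotientGroup.map K K (MulDistribMulAction.toMonoidHom H g) (hK g))

theorem Sylow.smul_conj_smul {U H : Type*} [Group U] [Group H] [MulDistribMulAction U H] {q : ℕ}
    (u : U) (k : H) (Q : Sylow q H) : u • k • Q = (u • k) • u • Q := by
  have h1 : ∀ (u : U) (Q : Sylow q H) (x : H), x ∈ u • Q ↔ u⁻¹ • x ∈ Q := fun u Q x =>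
    Subgroup.mem_pointwise_smul_iff_inv_smul_mem (S := (Q : Subgroup H))
  have h2 : ∀ (k : H) (Q : Sylow q H) (x : H), x ∈ k • Q ↔ k⁻¹ * x * k ∈ Q := fun k Q x => by
    refine (Subgroup.mem_pointwise_smul_iff_inv_smul_mem (S := (Q : Subgroup H))).trans ?_
    rw [← MulAut.conj.map_inv]
    rw [MulAut.smul_def, MulAut.conj_apply, inv_inv]
    rfl
  refine SetLike.ext fun x => ?_
  rw [h1, h2, h2, h1]
  simp [smul_mul']

theorem exists_stable_sylow {U : Type v} {H : Type*} [Group U] [Finite U] [Group.IsNilpotent U]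
    [Group H] [Finite H] [MulDistribMulAction U H] (hco : (Nat.card U).Coprime (Nat.card H))
    (q : ℕ) [Fact q.Prime] : ∃ Q : Sylow q H, ∀ u : U, u • Q = Q := by
  obtain ⟨Q, -, hQ⟩ := exists_fixed_of_coprime_of_transitive (K := H) (X := Sylow q H) _ U rfl
    Sylow.smul_conj_smul ⊤ Set.univ (by simp) (by simp) (by simp)
    (fun P _ Q _ => by simpa using exists_smul_eq H P Q)
    (by rwa [Subgroup.card_top]) Set.univ_nonempty
  exact ⟨Q, hQ⟩

theorem Sylow.smul_mem_of_smul_eq {U H : Type*} [Group U] [Group H] [MulDistribMulAction U H]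
    {q : ℕ} {Q : Sylow q H} {u : U} (hu : u • Q = Q) {x : H} (hx : x ∈ Q) : u • x ∈ Q := by
  rw [← hu]
  exact Subgroup.smul_mem_pointwise_smul x u (Q : Subgroup H) hx

theorem Sylow.smul_eq_of_forall_smul_mem {U H : Type*} [Group U] [Group H] [Finite H]
    [MulDistribMulAction U H] {q : ℕ} {Q : Sylow q H} {u : U} (h : ∀ x ∈ Q, u • x ∈ Q) :
    u • Q = Q := by
  refine Sylow.ext (SetLike.coe_injective ?_)
  change (fun x => u • x) '' (Q : Set H) = Q
  refine Set.eq_of_subset_of_ncard_le ?_ ?_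
  · rintro _ ⟨x, hx, rfl⟩
    exact h x hx
  · exact (Set.ncard_image_of_injective _ (MulAction.injective u)).ge

theorem exists_stable_sylow_ge {U : Type v} {H : Type*} [Group U] [Finite U] [Group.IsNilpotent U]
    [Group H] [Finite H] [MulDistribMulAction U H] (hco : (Nat.card U).Coprime (Nat.card H))
    (q : ℕ) [Fact q.Prime] {T : Subgroup H} (hT : IsPGroup q T)
    (hUT : ∀ u : U, ∀ x ∈ T, u • x ∈ T) :
    ∃ Q : Sylow q H, T ≤ Q ∧ ∀ u : U, u • Q = Q := by
  obtain ⟨R, hTR, hR⟩ := Finite.exists_le_maximal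
    (p := fun R : Subgroup H => IsPGroup q R ∧ ∀ u : U, ∀ x ∈ R, u • x ∈ R) ⟨hT, hUT⟩
  obtain ⟨⟨hRp, hUR⟩, hmax⟩ := hR
  let L := normalizer (R : Set H)
  have hUR' : ∀ (u : U) (x : H), u • x ∈ R ↔ x ∈ R := fun u x =>
    ⟨fun h => by simpa using hUR u⁻¹ _ h, hUR u x⟩
  have hUL : ∀ u : U, ∀ x ∈ L, u • x ∈ L := fun u x hx => by
    rw [mem_normalizer_iff] at hx ⊢
    intro y
    have := hx (u⁻¹ • y)
    rw [hUR' u⁻¹] at this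
    rw [this, ← hUR' u]
    simp [smul_mul']
  let _ := L.mulDistribMulActionOfStable hUL
  obtain ⟨P, hP⟩ := exists_stable_sylow (U := U) (H := L)
    (hco.coprime_dvd_right (card_subgroup_dvd_card L)) q
  have hRL : R ≤ L := le_normalizer
  have : (R.subgroupOf L).Normal := normal_in_normalizer
  have hRP : R.subgroupOf L ≤ P := by
    have hp : IsPGroup q (R.subgroupOf L) := hRp.comap_subtype
    exact hp.le_sylow_of_normal P
  have hPR : (P : Subgroup L).map L.subtype = R := by
    have hle : R ≤ (P : Subgroup L).map L.subtype := by
      rw [← map_subgroupOf_eq_of_le hRL]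
      exact map_mono hRP
    refine le_antisymm (hmax ⟨P.2.map _, ?_⟩ hle) hle
    rintro u _ ⟨x, hx, rfl⟩
    exact ⟨u • x, Sylow.smul_mem_of_smul_eq (hP u) hx, rfl⟩
  have hPR' : (P : Subgroup L) = R.subgroupOf L := by
    rw [← hPR, subgroupOf, comap_map_eq_self_of_injective (subtype_injective L)]
  have hcard : Nat.card R = q ^ (Nat.card H).factorization q := by
    obtain ⟨n, hn⟩ := IsPGroup.iff_card.mp hRp
    rw [hn]
    have hnle : n ≤ (Nat.card H).factorization q :=
      (Fact.out : q.Prime).pow_dvd_iff_le_factorization Nat.card_pos.ne' |>.mp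
        (hn ▸ card_subgroup_dvd_card R)
    by_contra hne
    have hlt : n < (Nat.card H).factorization q := lt_of_le_of_ne hnle fun h => hne (by rw [h])
    have hd := Sylow.prime_dvd_card_quotient_normalizer (p := q) (n := n)
      ((pow_dvd_pow q hlt).trans (Nat.ordProj_dvd _ _)) hn
    refine P.not_dvd_index ?_
    rw [hPR']
    exact hd
  exact ⟨Sylow.ofCard R hcard, hTR, fun u => Sylow.smul_eq_of_forall_smul_mem (hUR u)⟩

theorem card_fixedPoints_inf_sylow {U : Type v} {H : Type*} [Group U] [Finite U]
    [Group.IsNilpotent U] [Group H] [Finite H] [MulDistribMulAction U H]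
    (hco : (Nat.card U).Coprime (Nat.card H)) {q : ℕ} [Fact q.Prime] {Q : Sylow q H}
    (hQ : ∀ u : U, u • Q = Q) :
    Nat.card ↥(FixedPoints.subgroup U H ⊓ Q) =
      q ^ (Nat.card (FixedPoints.subgroup U H)).factorization q := by
  set C := FixedPoints.subgroup U H with hC
  have hmemC : ∀ x : H, x ∈ C ↔ ∀ u : U, u • x = x := fun x => Iff.rfl
  refine le_antisymm ?_ ?_
  · obtain ⟨n, hn⟩ := IsPGroup.iff_card.mp (Q.2.to_le (inf_le_right : C ⊓ Q ≤ Q))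
    rw [hn]
    refine Nat.pow_le_pow_right (Fact.out : q.Prime).pos
      ((Fact.out : q.Prime).pow_dvd_iff_le_factorization Nat.card_pos.ne' |>.mp ?_)
    rw [← hn]
    exact card_dvd_of_le inf_le_left
  · let T : Sylow q C := default
    let T' : Subgroup H := (T : Subgroup C).map C.subtype
    have hT'C : T' ≤ C := map_subtype_le _
    obtain ⟨R, hTR, hR⟩ := exists_stable_sylow_ge (U := U) hco q (T := T') (T.2.map _)
      (fun u x hx => by rwa [(hmemC x).mp (hT'C hx) u])
    obtain ⟨c, hc, hcR⟩ := exists_fixed_smul_eq_of_coprime (K := H) Sylow.smul_conj_smul hco hR hQ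
    have hle : T'.map (MulAut.conj c).toMonoidHom ≤ C ⊓ Q := by
      rintro _ ⟨x, hx, rfl⟩
      refine ⟨?_, ?_⟩
      · exact C.mul_mem (C.mul_mem ((hmemC c).mpr hc) (hT'C hx)) (C.inv_mem ((hmemC c).mpr hc))
      · rw [← hcR]
        exact Subgroup.smul_mem_pointwise_smul x (MulAut.conj c) (R : Subgroup H) (hTR hx)
    have hcard : Nat.card ↥(T'.map (MulAut.conj c).toMonoidHom) = Nat.card T := by
      rw [← Nat.card_congr (equivMapOfInjective T' _ (MulAut.conj c).injective).toEquiv]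
      exact (Nat.card_congr (equivMapOfInjective (T : Subgroup C) _
        C.subtype_injective).toEquiv).symm
    rw [← T.card_eq_multiplicity, ← hcard]
    exact Subgroup.card_le_of_le hle

theorem Nat.card_subtype_le_eq_add {α Z : Type*} [PartialOrder α] [Finite α] [Finite Z] (f : Z → α)
    (a : α) : Nat.card {z // a ≤ f z} =
      Nat.card {z // f z = a} + Nat.card (Σ b : {b // a < b}, {z // f z = b}) := by
  rw [← Nat.card_sum]
  refine Nat.card_congr (Equiv.symm (Equiv.ofBijective
    (Sum.elim (fun z => ⟨z.1, z.2.ge⟩) fun z => ⟨z.2.1, z.1.2.le.trans z.2.2.ge⟩) ⟨?_, ?_⟩))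
  · rintro (⟨z, hz⟩ | ⟨⟨b, hb⟩, z, hz⟩) (⟨w, hw⟩ | ⟨⟨c, hc⟩, w, hw⟩) hzw
    · simpa using hzw
    · obtain rfl : z = w := congrArg Subtype.val hzw
      exact absurd (hw.symm.trans hz) hc.ne'
    · obtain rfl : z = w := congrArg Subtype.val hzw
      exact absurd (hz.symm.trans hw) hb.ne'
    · obtain rfl : z = w := congrArg Subtype.val hzw
      obtain rfl : b = c := hz.symm.trans hw
      rfl
  · rintro ⟨z, hz⟩
    rcases hz.eq_or_lt with h | h
    · exact ⟨Sum.inl ⟨z, h.symm⟩, rfl⟩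
    · exact ⟨Sum.inr ⟨⟨f z, h⟩, z, rfl⟩, rfl⟩

theorem exists_eq_of_forall_card_le_eq {α X Y : Type*} [PartialOrder α] [Finite α] [Finite X]
    [Finite Y] {s : X → α} {t : Y → α}
    (h : ∀ a, Nat.card {x // a ≤ s x} = Nat.card {y // a ≤ t y}) (y : Y) : ∃ x, s x = t y := by
  have key : ∀ a, Nat.card {x // s x = a} = Nat.card {y // t y = a} := by
    intro a
    induction a using WellFoundedGT.induction with
    | _ a ih =>
    have h1 := h a
    rw [Nat.card_subtype_le_eq_add, Nat.card_subtype_le_eq_add] at h1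
    have h2 : Nat.card (Σ b : {b // a < b}, {x // s x = b}) =
        Nat.card (Σ b : {b // a < b}, {y // t y = b}) := by
      have := Fintype.ofFinite {b // a < b}
      rw [Nat.card_sigma, Nat.card_sigma]
      exact Finset.sum_congr rfl fun b _ => ih b.1 b.2
    omega
  have : 0 < Nat.card {x // s x = t y} := by
    rw [key]
    have : Nonempty {z // t z = t y} := ⟨⟨y, rfl⟩⟩
    exact Nat.card_pos
  obtain ⟨x, hx⟩ := (Nat.card_pos_iff.mp this).1
  exact ⟨x, hx⟩

/-- A nilpotent group of operators of coprime order has the same table of marks on `H` as on a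
product of stable Sylow subgroups. -/
theorem exists_stable_sylow_family {N : Type v} {H : Type*} [Group N] [Finite N]
    [Group.IsNilpotent N] [Group H] [Finite H] [MulDistribMulAction N H]
    (hco : (Nat.card N).Coprime (Nat.card H)) :
    ∃ Q : (Nat.card H).primeFactors → Subgroup H, (∀ q, IsPGroup q.1 (Q q)) ∧
      (∀ q, Q q ≠ ⊥) ∧ (∀ q, ∀ g : N, ∀ x ∈ Q q, g • x ∈ Q q) ∧
      ∀ U : Subgroup N, Nat.card {x : H // U ≤ stabilizer N x} =
        Nat.card {y : ∀ q, Q q // U ≤ ⨅ q, stabilizer N (y q : H)} := by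
  have hfact : ∀ q : (Nat.card H).primeFactors, Fact q.1.Prime := fun q =>
    ⟨Nat.prime_of_mem_primeFactors q.2⟩
  choose Q hQ using fun q : (Nat.card H).primeFactors => exists_stable_sylow (U := N) hco q.1
  refine ⟨fun q => Q q, fun q => (Q q).2, fun q h => ?_, fun q g x hx =>
    Sylow.smul_mem_of_smul_eq (hQ q g) hx, fun U => ?_⟩
  · have h1 := (Q q).dvd_card_of_dvd_card (Nat.dvd_of_mem_primeFactors q.2)
    rw [show (Q q : Subgroup H) = ⊥ from h, card_bot] at h1
    exact (hfact q).out.one_lt.ne' (Nat.dvd_one.mp h1)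
  · have hmem : ∀ x : H, x ∈ FixedPoints.subgroup U H ↔ U ≤ stabilizer N x := fun x =>
      ⟨fun h u hu => h ⟨u, hu⟩, fun h u => h u.2⟩
    have h1 : Nat.card {x : H // U ≤ stabilizer N x} = Nat.card (FixedPoints.subgroup U H) :=
      Nat.card_congr (Equiv.subtypeEquivRight fun x => (hmem x).symm)
    have h2 : Nat.card {y : ∀ q, (Q q : Subgroup H) // U ≤ ⨅ q, stabilizer N (y q : H)} =
        ∏ q, Nat.card ↥(FixedPoints.subgroup U H ⊓ Q q) := by
      rw [← Nat.card_pi]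
      refine Nat.card_congr
        { toFun := fun y q => ⟨(y.1 q).1, (hmem _).mpr (y.2.trans (iInf_le _ q)), (y.1 q).2⟩
          invFun := fun y => ⟨fun q => ⟨(y q).1, (y q).2.2⟩,
            le_iInf fun q => (hmem _).mp (y q).2.1⟩
          left_inv := fun y => rfl
          right_inv := fun y => rfl }
    have hco' : (Nat.card U).Coprime (Nat.card H) :=
      hco.coprime_dvd_left (card_subgroup_dvd_card U)
    rw [h1, h2, Finset.prod_congr rfl fun q _ =>
      card_fixedPoints_inf_sylow (U := U) hco' fun u => hQ q u]
    rw [Finset.prod_coe_sort (Nat.card H).primeFactors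
      fun q => q ^ (Nat.card (FixedPoints.subgroup U H)).factorization q]
    conv_lhs => rw [← Nat.prod_factorization_pow_eq_self
      (Nat.card_pos (α := FixedPoints.subgroup U H)).ne']
    refine Finsupp.prod_of_support_subset _ ?_ _ (by simp)
    rw [Nat.support_factorization]
    exact Nat.primeFactors_mono (card_subgroup_dvd_card _) Nat.card_pos.ne'

/-- Every nontrivial nilpotent group acting faithfully and coprimely on `H` has a point stabilizer
as small as claimed. -/
def HasSmallStabilizer (H : Type v) [Group H] : Prop :=
  ∀ (Γ : Type v) [Group Γ] [Finite Γ] [Group.IsNilpotent Γ] [Nontrivial Γ]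
    [MulDistribMulAction Γ H] [FaithfulSMul Γ H] (p : ℕ), 2 ≤ p →
    (∀ q : ℕ, q.Prime → q ∣ Nat.card Γ → p ≤ q) → (Nat.card Γ).Coprime (Nat.card H) →
    ∃ x : H, p * Nat.card (stabilizer Γ x) ^ p ≤ Nat.card Γ

theorem Subgroup.card_comap_of_surjective {G G' : Type*} [Group G] [Group G'] [Finite G]
    {f : G →* G'} (hf : Function.Surjective f) (S : Subgroup G') :
    Nat.card (S.comap f) = Nat.card f.ker * Nat.card S := by
  have := Finite.of_surjective f hf
  have h1 := (S.comap f).card_mul_index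
  rw [index_comap_of_surjective S hf, ← f.ker.card_mul_index, index_ker,
    MonoidHom.range_eq_top.mpr hf, card_top, ← S.card_mul_index, ← mul_assoc] at h1
  exact Nat.eq_of_mul_eq_mul_right (Nat.pos_of_ne_zero FiniteIndex.index_ne_zero) h1

theorem Subgroup.card_inf_eq_card_subgroupOf {G : Type*} [Group G] (M S : Subgroup G) :
    Nat.card ↥(M ⊓ S) = Nat.card (S.subgroupOf M) := by
  rw [inf_comm, ← subgroupOf_map_subtype, card_subtype]

theorem HasSmallStabilizer.exists_range {H : Type v} [Group H] [Finite H]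
    (h : HasSmallStabilizer H) {G : Type*} [Group G] [Finite G] [Group.IsNilpotent G]
    [MulDistribMulAction G H] {p : ℕ} (hp : 2 ≤ p)
    (hpG : ∀ q : ℕ, q.Prime → q ∣ Nat.card G → p ≤ q) (hco : (Nat.card G).Coprime (Nat.card H)) :
    (∀ g : G, ∀ x : H, g • x = x) ∨ ∃ x : H, x ≠ 1 ∧ p * Nat.card (stabilizer G x) ^ p ≤
      Nat.card G * Nat.card (MulDistribMulAction.toMulAut G H).ker ^ (p - 1) := by
  set φ := MulDistribMulAction.toMulAut G H with hφ
  have hdvd : Nat.card φ.range ∣ Nat.card G := card_range_dvd φ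
  rcases subsingleton_or_nontrivial φ.range with hs | hn
  · left
    intro g x
    have : φ.rangeRestrict g = 1 := Subsingleton.elim _ _
    exact DFunLike.congr_fun (congrArg Subtype.val this) x
  right
  have := Group.nilpotent_of_surjective φ.rangeRestrict φ.rangeRestrict_surjective
  obtain ⟨x, hx⟩ := h φ.range p hp (fun q hq hd => hpG q hq (hd.trans hdvd))
    (hco.coprime_dvd_left hdvd)
  refine ⟨x, ?_, ?_⟩
  · rintro rfl
    have : stabilizer φ.range (1 : H) = ⊤ := eq_top_iff.mpr fun g _ => smul_one g
    rw [this, card_top] at hx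
    have h1 : 0 < Nat.card φ.range := Nat.card_pos
    have h2 := Nat.le_self_pow (show p ≠ 0 by omega) (Nat.card φ.range)
    nlinarith
  · have h1 : stabilizer G x = (stabilizer φ.range x).comap φ.rangeRestrict := rfl
    have h2 : Nat.card G = Nat.card φ.ker * Nat.card φ.range := by
      rw [← φ.ker.card_mul_index, index_ker]
    rw [h1, card_comap_of_surjective φ.rangeRestrict_surjective, φ.ker_rangeRestrict, h2]
    obtain ⟨m, rfl⟩ : ∃ m, p = m + 1 := ⟨p - 1, by omega⟩
    calc _ = Nat.card φ.ker ^ (m + 1) * ((m + 1) * Nat.card (stabilizer φ.range x) ^ (m + 1)) := by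
          ring
      _ ≤ Nat.card φ.ker ^ (m + 1) * Nat.card φ.range := by gcongr
      _ = _ := by
        rw [Nat.add_sub_cancel]; ring

theorem HasSmallStabilizer.hasSmallMeets {H : Type v} [Group H] [Finite H]
    (h : HasSmallStabilizer H) {G : Type*} [Group G] [Finite G] [Group.IsNilpotent G]
    [MulDistribMulAction G H] {p : ℕ} (hp : 2 ≤ p)
    (hpG : ∀ q : ℕ, q.Prime → q ∣ Nat.card G → p ≤ q) (hco : (Nat.card G).Coprime (Nat.card H)) :
    HasSmallMeets p (⨅ x : H, stabilizer G x) {S | ∃ x : H, x ≠ 1 ∧ stabilizer G x = S} := by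
  intro M
  have hd := card_subgroup_dvd_card M
  rcases h.exists_range (G := M) hp (fun q hq h => hpG q hq (h.trans hd))
    (hco.coprime_dvd_left hd) with h1 | ⟨x, hx, hle⟩
  · exact Or.inl fun g hg => mem_iInf.mpr fun x => h1 ⟨g, hg⟩ x
  · refine Or.inr ⟨_, ⟨x, hx, rfl⟩, ?_⟩
    rw [card_inf_eq_card_subgroupOf, card_inf_eq_card_subgroupOf]
    have e : (⨅ x : H, stabilizer G x).subgroupOf M = (MulDistribMulAction.toMulAut M H).ker := by
      ext g
      rw [mem_subgroupOf, mem_iInf, MonoidHom.mem_ker]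
      exact ⟨fun h => MulEquiv.ext h, fun h x => DFunLike.congr_fun h x⟩
    rw [e]
    exact hle

theorem HasSmallStabilizer.hasSmallMeets_subgroup {H : Type v} [Group H] [Finite H]
    {G : Type*} [Group G] [Finite G] [Group.IsNilpotent G] [MulDistribMulAction G H]
    {W : Subgroup H} (h : HasSmallStabilizer W) (hW : ∀ g : G, ∀ x ∈ W, g • x ∈ W)
    {p : ℕ} (hp : 2 ≤ p) (hpG : ∀ q : ℕ, q.Prime → q ∣ Nat.card G → p ≤ q)
    (hco : (Nat.card G).Coprime (Nat.card H)) :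
    HasSmallMeets p (⨅ x : W, stabilizer G (x : H))
      {S | ∃ x ∈ W, x ≠ 1 ∧ stabilizer G x = S} := by
  let _ := W.mulDistribMulActionOfStable hW
  have hs : ∀ x : W, stabilizer G x = stabilizer G (x : H) := fun x => by
    ext g
    exact Subtype.ext_iff
  have key := h.hasSmallMeets (G := G) hp hpG (hco.coprime_dvd_right (card_subgroup_dvd_card W))
  simp only [hs] at key
  convert key using 1
  ext S
  constructor
  · rintro ⟨x, hx, hx1, rfl⟩
    exact ⟨⟨x, hx⟩, fun h => hx1 (congrArg Subtype.val h), rfl⟩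
  · rintro ⟨x, hx1, rfl⟩
    exact ⟨x, x.2, fun h => hx1 (Subtype.ext h), rfl⟩

theorem exists_small_stabilizer_of_not_isPGroup {H : Type v} [Group H] [Finite H]
    (ih : ∀ W : Subgroup H, W ≠ ⊤ → HasSmallStabilizer W)
    (hH : ∀ q : ℕ, q.Prime → ¬ IsPGroup q H) : HasSmallStabilizer H := by
  intro Γ _ _ _ _ _ _ p hp hpΓ hco
  obtain ⟨Q, hQp, hQ1, hQΓ, hQ⟩ := exists_stable_sylow_family (N := Γ) hco
  have hcard : ∀ U : Subgroup Γ, U ≤ ⨅ q, ⨅ x : Q q, stabilizer Γ (x : H) → U = ⊥ := by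
    intro U hU
    have h1 : Nat.card {x : H // U ≤ stabilizer Γ x} = Nat.card {x : H // ⊥ ≤ stabilizer Γ x} := by
      rw [hQ, hQ]
      refine Nat.card_congr (Equiv.subtypeEquivRight fun y => iff_of_true ?_ bot_le)
      exact le_iInf fun q => hU.trans ((iInf_le _ q).trans (iInf_le _ (y q)))
    have h2 : Nat.card {x : H // ⊥ ≤ stabilizer Γ x} = Nat.card H :=
      Nat.card_congr (Equiv.subtypeUnivEquiv fun x => bot_le)
    have h3 : ∀ x : H, U ≤ stabilizer Γ x := by
      intro x
      have h4 : {x : H | U ≤ stabilizer Γ x} = Set.univ :=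
        Set.eq_of_subset_of_ncard_le (Set.subset_univ _) (by
          rw [Set.ncard_univ, ← h2, ← h1, ← Nat.card_coe_set_eq]; rfl)
      exact Set.eq_univ_iff_forall.mp h4 x
    refine (eq_bot_iff_forall U).mpr fun u hu => eq_of_smul_eq_smul (α := H) fun x => ?_
    rw [one_smul]
    exact h3 x hu
  obtain ⟨S, hS, hle⟩ := exists_small_iInf_of_hasSmallMeets (p := p) (by omega)
    (K := fun q => ⨅ x : Q q, stabilizer Γ (x : H))
    (𝒮 := fun q => {S | ∃ x ∈ Q q, x ≠ 1 ∧ stabilizer Γ x = S})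
    (fun q => by
      obtain ⟨x, hx, hx1⟩ := (bot_or_exists_ne_one (Q q)).resolve_left (hQ1 q)
      exact ⟨_, x, hx, hx1, rfl⟩)
    (fun q S => by
      rintro ⟨x, hx, -, rfl⟩
      exact iInf_le _ (⟨x, hx⟩ : Q q))
    (fun q => (ih (Q q) fun h => hH q.1 (Nat.prime_of_mem_primeFactors q.2) (by
      have := hQp q
      rw [h] at this
      exact this.of_equiv topEquiv)).hasSmallMeets_subgroup (hQΓ q) hp hpΓ hco)
    (hcard _ le_rfl)
  choose y hyQ hy1 hy using hS
  obtain ⟨x, hx⟩ := exists_eq_of_forall_card_le_eq hQ fun q => (⟨y q, hyQ q⟩ : Q q)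
  refine ⟨x, ?_⟩
  simp only [hx, hy]
  exact hle

theorem exists_le_stabilizer_of_le_stabilizer_quotient {G H : Type*} [Group G] [Finite G]
    [Group.IsNilpotent G] [Group H] [Finite H] [MulDistribMulAction G H]
    (hco : (Nat.card G).Coprime (Nat.card H)) {K : Subgroup H} [K.Normal]
    (hK : ∀ g : G, ∀ k ∈ K, g • k ∈ K) (h : H) {U : Subgroup G}
    (hU : ∀ u ∈ U, (QuotientGroup.mk (u • h) : H ⧸ K) = QuotientGroup.mk h) :
    ∃ k ∈ K, U ≤ stabilizer G (k * h) := by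
  have hfib : ∀ u : U, u • h * h⁻¹ ∈ K := fun u => by
    have h1 := QuotientGroup.eq.mp (hU u u.2).symm
    have h2 := (inferInstance : K.Normal).conj_mem _ h1 h
    convert h2 using 1
    group
    rfl
  obtain ⟨x, hx, hfix⟩ := exists_fixed_of_coprime_of_transitive (K := H) (X := H) _ U rfl
    (fun u k x => smul_mul' u k x) K {x | x * h⁻¹ ∈ K} (fun u => hK u)
    (fun u x hx => by
      have h1 := mul_mem (hK u _ hx) (hfib u)
      change u • (x * h⁻¹) * _ ∈ K at h1
      simpa [smul_mul', smul_inv', mul_assoc] using h1)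
    (fun k hk x hx => by
      change k * x * h⁻¹ ∈ K
      rw [mul_assoc]
      exact mul_mem hk hx)
    (fun x hx y hy => ⟨y * x⁻¹, by
      have := K.mul_mem hy (K.inv_mem hx)
      simpa [mul_assoc] using this, by simp⟩)
    ((hco.coprime_dvd_left (card_subgroup_dvd_card U)).coprime_dvd_right
      (card_subgroup_dvd_card K)) ⟨h, by simp⟩
  exact ⟨x * h⁻¹, hx, fun u hu => by simpa using hfix ⟨u, hu⟩⟩

theorem exists_small_stabilizer_of_normal {H : Type v} [Group H] [Finite H] {Γ : Type*} [Group Γ]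
    [Finite Γ] [Group.IsNilpotent Γ] [Nontrivial Γ] [MulDistribMulAction Γ H] [FaithfulSMul Γ H]
    {p : ℕ} (hp : 2 ≤ p) (hpΓ : ∀ q : ℕ, q.Prime → q ∣ Nat.card Γ → p ≤ q)
    (hco : (Nat.card Γ).Coprime (Nat.card H)) {K : Subgroup H} [K.Normal]
    (hK : ∀ g : Γ, ∀ k ∈ K, g • k ∈ K) (hK1 : K ≠ ⊥) (hK2 : K ≠ ⊤) (h1 : HasSmallStabilizer K)
    (h2 : HasSmallStabilizer (H ⧸ K)) :
    ∃ x : H, p * Nat.card (stabilizer Γ x) ^ p ≤ Nat.card Γ := by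
  let _ := K.mulDistribMulActionQuotient hK
  have hmeets := h2.hasSmallMeets (G := Γ) hp hpΓ
    (hco.coprime_dvd_right (card_quotient_dvd_card K))
  obtain ⟨S, hS, hle⟩ := exists_small_iInf_of_hasSmallMeets (p := p) (by omega)
    (K := fun b => cond b (⨅ x : K, stabilizer Γ (x : H)) (⨅ x : H ⧸ K, stabilizer Γ x))
    (𝒮 := fun b => cond b {S | ∃ x ∈ K, x ≠ 1 ∧ stabilizer Γ x = S}
      {S | ∃ x : H ⧸ K, x ≠ 1 ∧ stabilizer Γ x = S})
    (fun b => by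
      cases b
      · obtain ⟨x, hx⟩ : ∃ x : H, x ∉ K := by
          by_contra! h
          exact hK2 (eq_top_iff.mpr fun x _ => h x)
        exact ⟨_, x, fun h => hx ((QuotientGroup.eq_one_iff x).mp h), rfl⟩
      · obtain ⟨x, hx, hx1⟩ := K.bot_or_exists_ne_one.resolve_left hK1
        exact ⟨_, x, hx, hx1, rfl⟩)
    (fun b S hS => by
      cases b
      · obtain ⟨x, -, rfl⟩ := hS
        exact iInf_le _ x
      · obtain ⟨x, hx, -, rfl⟩ := hS
        exact iInf_le _ (⟨x, hx⟩ : K))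
    (fun b => by
      cases b
      · exact hmeets
      · exact h1.hasSmallMeets_subgroup hK hp hpΓ hco)
    (by
      rw [iInf_bool_eq]
      refine (eq_bot_iff_forall _).mpr fun u hu => eq_of_smul_eq_smul (α := H) fun h => ?_
      obtain ⟨hu1, hu2⟩ := mem_inf.mp hu
      obtain ⟨k, hk, hkU⟩ := exists_le_stabilizer_of_le_stabilizer_quotient hco hK h
        (U := zpowers u) (fun g hg => by
          have : g ∈ stabilizer Γ (QuotientGroup.mk h : H ⧸ K) :=
            (zpowers_le.mpr (mem_iInf.mp hu2 _)) hg
          exact this)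
      have h3 : u • (k * h) = k * h := hkU (mem_zpowers u)
      rw [smul_mul', show u • k = k from mem_iInf.mp hu1 ⟨k, hk⟩] at h3
      rw [one_smul, mul_left_cancel h3])
  rw [iInf_bool_eq] at hle
  obtain ⟨k, hk, -, hkS⟩ := hS true
  obtain ⟨x, -, hxS⟩ := hS false
  induction x using QuotientGroup.induction_on with
  | H h =>
  obtain ⟨l, hl, hlU⟩ := exists_le_stabilizer_of_le_stabilizer_quotient hco hK h
    (U := S false) (fun g hg => by
      rw [← hxS] at hg
      exact hg)
  refine ⟨k * (l * h), le_trans ?_ hle⟩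
  gcongr
  refine Subgroup.card_le_of_le fun g hg => ?_
  have hg' : g • (k * (l * h)) = k * (l * h) := hg
  have hgS : g ∈ S false := by
    rw [← hxS]
    have h3 := congrArg (QuotientGroup.mk : H → H ⧸ K) hg'
    have h4 : (QuotientGroup.mk (k * (l * h)) : H ⧸ K) = QuotientGroup.mk h := by
      rw [← mul_assoc, QuotientGroup.mk_mul, (QuotientGroup.eq_one_iff _).mpr (mul_mem hk hl),
        one_mul]
    have h5 : (QuotientGroup.mk (g • (k * (l * h))) : H ⧸ K) =
        g • (QuotientGroup.mk (k * (l * h)) : H ⧸ K) := rfl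
    rw [h5, h4] at h3
    exact h3
  refine mem_inf.mpr ⟨?_, hgS⟩
  rw [← hkS]
  rw [smul_mul', show g • (l * h) = l * h from hlU hgS] at hg'
  exact mul_right_cancel hg'

theorem exists_small_stabilizer_of_imprimitive {H : Type v} [CommGroup H] [Finite H]
    (ih : ∀ W : Subgroup H, W ≠ ⊤ → HasSmallStabilizer W) {Γ : Type*} [Group Γ] [Finite Γ]
    [Group.IsNilpotent Γ] [MulDistribMulAction Γ H]
    {p : ℕ} (hp : 2 ≤ p) (hpΓ : ∀ q : ℕ, q.Prime → q ∣ Nat.card Γ → p ≤ q)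
    (hco : (Nat.card Γ).Coprime (Nat.card H)) {M : Subgroup Γ} [M.Normal] (hM : M ≠ ⊤)
    [Fintype (Γ ⧸ M)]
    {W : Γ ⧸ M → Subgroup H} (hindep : ∀ w : Γ ⧸ M → H, (∀ j, w j ∈ W j) → ∏ j, w j = 1 →
      ∀ j, w j = 1) (hperm : ∀ (g : Γ) (j : Γ ⧸ M), ∀ x ∈ W j, g • x ∈ W (g • j))
    (hne : ∀ j, W j ≠ ⊥) (hfaith : ∀ g : Γ, (∀ j, ∀ x ∈ W j, g • x = x) → g = 1) :
    ∃ x : H, p * Nat.card (stabilizer Γ x) ^ p ≤ Nat.card Γ := by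
  classical
  have hM1 : M.index ≠ 1 := fun h => hM (index_eq_one.mp h)
  have hpr : p ≤ M.index :=
    (hpΓ _ (Nat.minFac_prime hM1) ((Nat.minFac_dvd _).trans M.index_dvd_card)).trans
      (Nat.minFac_le (Nat.pos_of_ne_zero FiniteIndex.index_ne_zero))
  have hcardM := M.card_mul_index
  have hMd := card_subgroup_dvd_card M
  have hindep' : ∀ w w' : Γ ⧸ M → H, (∀ j, w j ∈ W j) → (∀ j, w' j ∈ W j) →
      ∏ j, w j = ∏ j, w' j → ∀ j, w j = w' j := by
    intro w w' hw hw' h j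
    have := hindep (fun j => w j / w' j) (fun j => div_mem (hw j) (hw' j))
      (by rw [Finset.prod_div_distrib, h, div_self']) j
    exact div_eq_one.mp this
  have hfix : ∀ w : Γ ⧸ M → H, (∀ j, w j ∈ W j) → ∀ g ∈ stabilizer Γ (∏ j, w j), ∀ j,
      g • w j = w (g • j) := by
    intro w hw g hg j
    have h1 := hindep' (fun j => g • w (g⁻¹ • j)) w
      (fun j => by simpa using hperm g _ _ (hw (g⁻¹ • j))) hw (by
        rw [← Finset.smul_prod']
        refine Eq.trans ?_ hg
        congr 1
        exact Fintype.prod_equiv (MulAction.toPerm g⁻¹) _ _ fun j => rfl) (g • j)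
    simpa using h1
  have hMj : ∀ (g : Γ) (j : Γ ⧸ M), g • j = j ↔ g ∈ M := by
    intro g j
    induction j using QuotientGroup.induction_on with
    | H a =>
    rw [MulAction.Quotient.smul_mk, eq_comm, QuotientGroup.eq, smul_eq_mul]
    have := (inferInstance : M.Normal).mem_comm_iff (a := a⁻¹) (b := g * a)
    rw [this, mul_inv_cancel_right]
  have htop : ∀ j, W j ≠ ⊤ := by
    intro j hj
    have : Nontrivial (Γ ⧸ M) := by
      rwa [← Finite.one_lt_card_iff_nontrivial, ← index_eq_card, Nat.one_lt_iff_ne_zero_and_ne_one,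
        and_iff_right FiniteIndex.index_ne_zero]
    obtain ⟨i, hi⟩ := exists_ne j
    obtain ⟨x, hx, hx1⟩ := (W i).bot_or_exists_ne_one.resolve_left (hne i)
    have h1 := hindep' (Pi.mulSingle i x) (Pi.mulSingle j x) (fun k => by
      rcases eq_or_ne k i with rfl | hk
      · simpa using hx
      · simp [hk]) (fun k => by
      rcases eq_or_ne k j with rfl | hk
      · simp [hj]
      · simp [hk]) (by simp) i
    rw [Pi.mulSingle_eq_same, Pi.mulSingle_eq_of_ne hi] at h1
    exact hx1 h1
  have hWM : ∀ j, ∀ g : M, ∀ x ∈ W j, g • x ∈ W j := fun j g x hx => by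
    have := hperm g j x hx
    rwa [(hMj g j).mpr g.2] at this
  let K : Γ ⧸ M → Subgroup M := fun j => ⨅ x : W j, stabilizer M (x : H)
  let 𝒮 : Γ ⧸ M → Set (Subgroup M) := fun j => {S | ∃ x ∈ W j, x ≠ 1 ∧ stabilizer M x = S}
  have h𝒮 : ∀ j, (𝒮 j).Nonempty := fun j => by
    obtain ⟨x, hx, hx1⟩ := (W j).bot_or_exists_ne_one.resolve_left (hne j)
    exact ⟨_, x, hx, hx1, rfl⟩
  have hK𝒮 : ∀ j, ∀ S ∈ 𝒮 j, K j ≤ S := by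
    rintro j _ ⟨x, hx, -, rfl⟩
    exact iInf_le _ (⟨x, hx⟩ : W j)
  have hmeets : ∀ j, HasSmallMeets p (K j) (𝒮 j) := fun j =>
    (ih (W j) (htop j)).hasSmallMeets_subgroup (hWM j) hp
      (fun q hq h => hpΓ q hq (h.trans hMd)) (hco.coprime_dvd_left hMd)
  have hKbot : Finset.univ.inf K = ⊥ := by
    rw [Finset.inf_univ_eq_iInf]
    refine (eq_bot_iff_forall _).mpr fun g hg => Subtype.ext (hfaith g fun j x hx => ?_)
    exact mem_iInf.mp (mem_iInf.mp hg j) ⟨x, hx⟩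
  obtain ⟨S, t, hS, hle, ht, -, htr⟩ :=
    exists_small_inf_of_hasSmallMeets (p := p) (by omega) h𝒮 hK𝒮 hmeets Finset.univ
  rw [Finset.card_univ, ← Nat.card_eq_fintype_card, ← index_eq_card] at ht htr
  rcases htr.lt_or_eq with htlt | rfl
  · obtain ⟨i, -, hi⟩ := ht htlt
    have hKi : (Finset.univ.erase i).inf K = ⊥ := by
      rw [← hKbot, ← Finset.insert_erase (Finset.mem_univ i), Finset.inf_insert,
        inf_eq_right.mpr hi, Finset.insert_erase (Finset.mem_univ i)]
    obtain ⟨S, t, hS, hle, -, ht0, -⟩ :=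
      exists_small_inf_of_hasSmallMeets (p := p) (by omega) h𝒮 hK𝒮 hmeets (Finset.univ.erase i)
    choose w hw hw1 hwS using hS
    let w' := Function.update w i 1
    have hw' : ∀ j, w' j ∈ W j := fun j => by
      rcases eq_or_ne j i with rfl | hj
      · simp [w']
      · simpa [w', hj] using hw j
    have hw'1 : ∀ j, w' j = 1 ↔ j = i := fun j => by
      rcases eq_or_ne j i with rfl | hj
      · simp [w']
      · simp [w', hj, hw1 j]
    have hCM : stabilizer Γ (∏ j, w' j) ≤ M := fun g hg => by
      rw [← hMj g i, ← hw'1, ← hfix w' hw' g hg, (hw'1 i).mpr rfl, smul_one]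
    have hC : Nat.card (stabilizer Γ (∏ j, w' j)) ≤ Nat.card ↥((Finset.univ.erase i).inf S) := by
      rw [← inf_eq_right.mpr hCM, card_inf_eq_card_subgroupOf]
      refine Subgroup.card_le_of_le ?_
      refine Finset.le_inf fun j hj g hg => ?_
      have h1 := hfix w' hw' g hg j
      rw [(hMj g j).mpr g.2] at h1
      rw [show w' j = w j by simp [w', Finset.ne_of_mem_erase hj]] at h1
      rw [← hwS]
      exact h1
    refine ⟨∏ j, w' j, ?_⟩
    rw [hKi, card_bot, one_pow, mul_one] at hle
    rcases Nat.eq_zero_or_pos t with rfl | htpos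
    · have hMbot := ht0 rfl
      rw [hKi] at hMbot
      have hM1 : Nat.card M = 1 := by rw [← card_top, ← hMbot, card_bot]
      have hC1 : Nat.card (stabilizer Γ (∏ j, w' j)) ≤ 1 := by
        rw [← hM1]; exact Subgroup.card_le_of_le hCM
      calc _ ≤ p * 1 ^ p := by gcongr
        _ = p := by simp
        _ ≤ M.index := hpr
        _ ≤ _ := Nat.le_of_dvd Nat.card_pos M.index_dvd_card
    · calc p * Nat.card (stabilizer Γ (∏ j, w' j)) ^ p
          ≤ p ^ t * Nat.card ↥((Finset.univ.erase i).inf S) ^ p := by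
            gcongr
            exact Nat.le_self_pow htpos.ne' p
        _ ≤ Nat.card M := by rwa [mul_comm]
        _ ≤ _ := Nat.le_of_dvd Nat.card_pos hMd
  · choose w hw hw1 hwS using hS
    refine ⟨∏ j, w j, ?_⟩
    have hC : Nat.card (stabilizer Γ (∏ j, w j)) ≤
        M.index * Nat.card ↥(Finset.univ.inf S) := by
      have h1 := relIndex_mul_relIndex ⊥ (M ⊓ stabilizer Γ (∏ j, w j))
        (stabilizer Γ (∏ j, w j)) bot_le inf_le_right
      rw [relIndex_bot_left, relIndex_bot_left, inf_relIndex_right,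
        card_inf_eq_card_subgroupOf, mul_comm] at h1
      rw [← h1]
      refine Nat.mul_le_mul ?_ (Subgroup.card_le_of_le ?_)
      · rw [← relIndex_top_right]
        exact relIndex_le_of_le_right le_top (by
          rw [relIndex_top_right]; exact FiniteIndex.index_ne_zero)
      · refine Finset.le_inf fun j _ g hg => ?_
        have h1 := hfix w hw g hg j
        rw [(hMj g j).mpr g.2] at h1
        rw [← hwS]
        exact h1
    rw [hKbot, card_bot, one_pow, mul_one] at hle
    have hpow := Nat.pow_sub_one_le_pow_sub_one hp hpr
    set r := M.index
    set c := Nat.card ↥(Finset.univ.inf S)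
    refine le_trans (Nat.mul_le_mul_left p (Nat.pow_le_pow_left hC p)) ?_
    have hppos : 0 < p ^ (r - 1) := by positivity
    refine Nat.le_of_mul_le_mul_right (c := p ^ (r - 1)) ?_ hppos
    calc p * (r * c) ^ p * p ^ (r - 1) = c ^ p * (p ^ (r - 1) * p) * (r ^ (p - 1) * r) := by
          rw [← pow_succ r, Nat.sub_add_cancel (by omega)]; ring
      _ = c ^ p * p ^ r * (r * r ^ (p - 1)) := by
          rw [← pow_succ p, Nat.sub_add_cancel (by omega), mul_comm r]
      _ ≤ Nat.card M * (r * p ^ (r - 1)) := by gcongr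
      _ = _ := by rw [← mul_assoc, hcardM]

theorem eq_one_of_prod_eq_one_of_mem_fixedPoints {H : Type*} [CommGroup H] {Γ : Type*} [Group Γ]
    [Finite Γ] [MulDistribMulAction Γ H] {A : Subgroup Γ} (hA : ∀ a ∈ A, ∀ b ∈ A, a * b = b * a)
    {m : ℕ} (hmax : ∀ z : H, z ≠ 1 → Nat.card ↥(A ⊓ stabilizer Γ z) ≤ m)
    (s : Finset (Subgroup Γ)) (hsA : ∀ D ∈ s, D ≤ A) (hsm : ∀ D ∈ s, m ≤ Nat.card D)
    {w : Subgroup Γ → H} (hw : ∀ D : Subgroup Γ, w D ∈ FixedPoints.subgroup D H)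
    (hprod : ∏ D ∈ s, w D = 1) :
    ∀ D ∈ s, w D = 1 := by
  classical
  induction s using Finset.induction_on generalizing w with
  | empty => simp
  | insert B s hB ih =>
    rw [Finset.prod_insert hB] at hprod
    have hBA := hsA B (Finset.mem_insert_self B s)
    have hBm := hsm B (Finset.mem_insert_self B s)
    have ih := @ih (fun D hD => hsA D (Finset.mem_insert_of_mem hD))
      (fun D hD => hsm D (Finset.mem_insert_of_mem hD))
    have hfix : ∀ D ∈ s, ∀ b ∈ B, b • w D = w D := by
      intro D hD b hb
      let w' : Subgroup Γ → H := fun D => if D ≤ A then b • w D / w D else 1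
      have hw' : ∀ D : Subgroup Γ, w' D ∈ FixedPoints.subgroup D H := by
        intro D
        by_cases hDA : D ≤ A
        · simp only [w', if_pos hDA]
          refine div_mem (fun d => ?_) (hw D)
          change d.1 • b • w D = b • w D
          rw [← mul_smul, hA _ (hDA d.2) b (hBA hb), mul_smul]
          exact congrArg (b • ·) (hw D d)
        · simp only [w', if_neg hDA]
          exact one_mem _
      have h1 : ∏ D ∈ s, w' D = 1 := by
        have h2 : ∏ D ∈ s, w' D = ∏ D ∈ s, (b • w D / w D) :=
          Finset.prod_congr rfl fun D hD => if_pos (hsA D (Finset.mem_insert_of_mem hD))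
        have h3 : b • w B = w B := hw B ⟨b, hb⟩
        have h4 := congrArg (b • ·) hprod
        simp only [smul_mul', smul_one, h3] at h4
        rw [h2, Finset.prod_div_distrib, ← Finset.smul_prod', div_eq_one]
        exact mul_left_cancel (h4.trans hprod.symm)
      have h5 := ih hw' h1 D hD
      simp only [w', if_pos (hsA D (Finset.mem_insert_of_mem hD))] at h5
      exact div_eq_one.mp h5
    have hs1 : ∀ D ∈ s, w D = 1 := by
      intro D hD
      by_contra hne
      have h1 : D ≤ A ⊓ stabilizer Γ (w D) :=
        le_inf (hsA D (Finset.mem_insert_of_mem hD)) fun d hd => hw D ⟨d, hd⟩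
      have h2 : B ≤ A ⊓ stabilizer Γ (w D) := le_inf hBA fun b hb => hfix D hD b hb
      have h3 := hmax _ hne
      have h4 := eq_of_le_of_card_ge h1 (h3.trans (hsm D (Finset.mem_insert_of_mem hD)))
      have h5 := eq_of_le_of_card_ge h2 (h3.trans hBm)
      exact hB (h5.trans h4.symm ▸ hD)
    rw [Finset.prod_eq_one hs1, mul_one] at hprod
    intro D hD
    rcases Finset.mem_insert.mp hD with rfl | hD
    · exact hprod
    · exact hs1 D hD

theorem exists_small_stabilizer_of_not_semiregular {H : Type v} [CommGroup H] [Finite H]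
    (ih : ∀ W : Subgroup H, W ≠ ⊤ → HasSmallStabilizer W) {Γ : Type*} [Group Γ] [Finite Γ]
    [Group.IsNilpotent Γ] [MulDistribMulAction Γ H] [FaithfulSMul Γ H]
    {p : ℕ} (hp : 2 ≤ p) (hpΓ : ∀ q : ℕ, q.Prime → q ∣ Nat.card Γ → p ≤ q)
    (hco : (Nat.card Γ).Coprime (Nat.card H))
    (hirr : ∀ W : Subgroup H, (∀ g : Γ, ∀ x ∈ W, g • x ∈ W) → W = ⊥ ∨ W = ⊤)
    {A : Subgroup Γ} [A.Normal] (hA : ∀ a ∈ A, ∀ b ∈ A, a * b = b * a) {a : Γ} (ha : a ∈ A)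
    (ha1 : a ≠ 1) {x : H} (hx1 : x ≠ 1) (hax : a • x = x) :
    ∃ x : H, p * Nat.card (stabilizer Γ x) ^ p ≤ Nat.card Γ := by
  classical
  have := Fintype.ofFinite Γ
  obtain ⟨y, hy1, hymax⟩ := Set.exists_max_image {y : H | y ≠ 1}
    (fun y => Nat.card ↥(A ⊓ stabilizer Γ y)) (Set.toFinite _) ⟨x, hx1⟩
  set D := A ⊓ stabilizer Γ y with hD
  have hDne : D ≠ ⊥ := by
    intro h
    have h1 := hymax x hx1
    rw [h, card_bot] at h1
    exact ha1 ((eq_bot_iff_forall _).mp (eq_bot_of_card_le _ h1) a ⟨ha, hax⟩)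
  let cj : Γ → Subgroup Γ → Subgroup Γ := fun n B => B.map (MulAut.conj n).toMonoidHom
  have hcj : ∀ n B d, d ∈ cj n B ↔ n⁻¹ * d * n ∈ B := fun n B d => by
    constructor
    · rintro ⟨b, hb, rfl⟩
      simpa [mul_assoc] using hb
    · exact fun h => ⟨_, h, by simp [mul_assoc]⟩
  have hcjmul : ∀ m n B, cj m (cj n B) = cj (m * n) B := fun m n B => by
    ext d
    simp only [hcj, mul_inv_rev, mul_assoc]
  have hcjone : ∀ B, cj 1 B = B := fun B => by
    ext d
    simp [hcj]
  have hcjF : ∀ (n : Γ) (B : Subgroup Γ) (z : H), z ∈ FixedPoints.subgroup B H →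
      n • z ∈ FixedPoints.subgroup (cj n B) H := fun n B z hz d => by
    have h1 := hz ⟨_, (hcj n B d).mp d.2⟩
    change (n⁻¹ * d.1 * n) • z = z at h1
    rw [mul_smul, mul_smul, inv_smul_eq_iff] at h1
    exact h1
  have hyF : y ∈ FixedPoints.subgroup D H := fun d => d.2.2
  have hnorm : normalizer (D : Set Γ) ≠ ⊤ := by
    intro h
    have hDn : D.Normal := normalizer_eq_top_iff.mp h
    rcases hirr (FixedPoints.subgroup D H) (fun g z hz => by
      have h1 := hcjF g D z hz
      have h2 : cj g D = D := by
        ext d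
        rw [hcj]
        have := hDn.conj_mem
        exact ⟨fun h => by simpa [mul_assoc] using this _ h g,
          fun h => by simpa using this _ h g⁻¹⟩
      rwa [h2] at h1) with h1 | h1
    · exact hy1 (by rw [h1] at hyF; exact hyF)
    · refine hDne ((eq_bot_iff_forall D).mpr fun d hd => eq_of_smul_eq_smul (α := H) fun z => ?_)
      have h2 : z ∈ FixedPoints.subgroup D H := h1 ▸ mem_top z
      rw [one_smul]
      exact h2 ⟨d, hd⟩
  obtain ⟨M, hM, hDM⟩ := (eq_top_or_exists_le_coatom (normalizer (D : Set Γ))).resolve_left hnorm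
  have hMn : M.Normal :=
    NormalizerCondition.normal_of_coatom M Group.normalizerCondition_of_isNilpotent hM
  obtain ⟨c, hc⟩ : ∃ c : Subgroup Γ → Γ ⧸ M, ∀ n, c (cj n D) = QuotientGroup.mk n := by
    have hfac : (QuotientGroup.mk : Γ → Γ ⧸ M).FactorsThrough fun n => cj n D := by
      intro m n hmn
      refine QuotientGroup.eq.mpr (hDM ?_)
      have h1 : cj (m⁻¹ * n) D = D := by
        rw [← hcjmul, ← show cj m D = cj n D from hmn, hcjmul, inv_mul_cancel, hcjone]
      refine mem_normalizer_iff.mpr fun d => ?_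
      conv_rhs => rw [← h1]
      rw [hcj]
      simp [mul_assoc]
    exact ⟨Function.extend (fun n => cj n D) QuotientGroup.mk fun _ => QuotientGroup.mk 1,
      fun n => hfac.extend_apply _ n⟩
  let Ω : Finset (Subgroup Γ) := Finset.univ.image fun n => cj n D
  have hΩ : ∀ B, B ∈ Ω ↔ ∃ n, cj n D = B := fun B => by simp [Ω]
  have hcjc : ∀ g, ∀ B ∈ Ω, cj g B ∈ Ω ∧ c (cj g B) = g • c B := fun g B hB => by
    obtain ⟨n, rfl⟩ := (hΩ B).mp hB
    rw [hcjmul, hc, hc]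
    exact ⟨(hΩ _).mpr ⟨_, rfl⟩, rfl⟩
  have := Fintype.ofFinite (Γ ⧸ M)
  let W : Γ ⧸ M → Subgroup H := fun j =>
    { carrier := {x | ∃ w : Subgroup Γ → H, (∀ B : Subgroup Γ, w B ∈ FixedPoints.subgroup B H) ∧
        ∏ B ∈ Ω with c B = j, w B = x}
      one_mem' := ⟨fun _ => 1, fun _ => one_mem _, by simp⟩
      mul_mem' := by
        rintro _ _ ⟨w, hw, rfl⟩ ⟨w', hw', rfl⟩
        exact ⟨fun B => w B * w' B, fun B => mul_mem (hw B) (hw' B), Finset.prod_mul_distrib⟩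
      inv_mem' := by
        rintro _ ⟨w, hw, rfl⟩
        exact ⟨fun B => (w B)⁻¹, fun B => inv_mem (hw B), Finset.prod_inv_distrib _⟩ }
  have hperm : ∀ (g : Γ) (j : Γ ⧸ M), ∀ x ∈ W j, g • x ∈ W (g • j) := by
    rintro g j _ ⟨w, hw, rfl⟩
    refine ⟨fun B => g • w (cj g⁻¹ B), fun B => ?_, ?_⟩
    · have := hcjF g _ _ (hw (cj g⁻¹ B))
      rwa [hcjmul, mul_inv_cancel, hcjone] at this
    · rw [Finset.smul_prod']
      refine Finset.prod_nbij' (cj g⁻¹) (cj g) ?_ ?_ ?_ ?_ ?_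
      · intro B hB
        rw [Finset.mem_filter] at hB ⊢
        obtain ⟨h1, h2⟩ := hcjc g⁻¹ B hB.1
        exact ⟨h1, by rw [h2, hB.2, inv_smul_smul]⟩
      · intro B hB
        rw [Finset.mem_filter] at hB ⊢
        obtain ⟨h1, h2⟩ := hcjc g B hB.1
        exact ⟨h1, by rw [h2, hB.2]⟩
      · intro B _
        rw [hcjmul, mul_inv_cancel, hcjone]
      · intro B _
        rw [hcjmul, inv_mul_cancel, hcjone]
      · intro B _
        rfl
  have hne : ∀ j, W j ≠ ⊥ := by
    intro j hj
    induction j using QuotientGroup.induction_on with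
    | H n =>
    have h1 : n • y ∈ W (QuotientGroup.mk n) := by
      refine ⟨Pi.mulSingle (cj n D) (n • y), fun B => ?_, ?_⟩
      · rcases eq_or_ne B (cj n D) with rfl | hB
        · rw [Pi.mulSingle_eq_same]
          exact hcjF n D y hyF
        · rw [Pi.mulSingle_eq_of_ne hB]
          exact one_mem _
      · rw [Finset.prod_pi_mulSingle', if_pos]
        exact Finset.mem_filter.mpr ⟨(hΩ _).mpr ⟨n, rfl⟩, hc n⟩
    rw [hj, mem_bot, ← smul_one n] at h1
    exact hy1 (MulAction.injective n h1)
  refine exists_small_stabilizer_of_imprimitive ih hp hpΓ hco hM.1 (W := W) ?_ hperm hne ?_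
  · intro w hw hprod
    choose v hv hvw using hw
    have h1 : ∏ B ∈ Ω, v (c B) B = 1 := by
      rw [← hprod, ← Finset.prod_fiberwise Ω c]
      refine Finset.prod_congr rfl fun j _ => ?_
      rw [← hvw]
      exact Finset.prod_congr rfl fun B hB => by rw [(Finset.mem_filter.mp hB).2]
    have hcard : ∀ n, Nat.card (cj n D) = Nat.card D := fun n =>
      card_map_of_injective (MulAut.conj n).injective
    have h2 := eq_one_of_prod_eq_one_of_mem_fixedPoints hA hymax Ω (fun B hB => by
      obtain ⟨n, rfl⟩ := (hΩ B).mp hB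
      intro d hd
      have h3 := (inferInstance : A.Normal).conj_mem _ ((hcj n D d).mp hd).1 n
      simpa [mul_assoc] using h3) (fun B hB => by
      obtain ⟨n, rfl⟩ := (hΩ B).mp hB
      exact (hcard n).ge) (fun B => hv (c B) B) h1
    intro j
    rw [← hvw]
    refine Finset.prod_eq_one fun B hB => ?_
    obtain ⟨hB1, rfl⟩ := Finset.mem_filter.mp hB
    exact h2 B hB1
  · intro g hg
    have h1 : ⨆ j, W j = ⊤ := by
      refine (hirr _ fun g => ?_).resolve_left fun h => hne (QuotientGroup.mk 1)
        (le_bot_iff.mp (h ▸ le_iSup W _))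
      change ⨆ j, W j ≤ (⨆ j, W j).comap (MulDistribMulAction.toMonoidHom H g)
      exact iSup_le fun j x hx => (le_iSup W (g • j)) (hperm g j x hx)
    have h2 : ⨆ j, W j ≤ (MulDistribMulAction.toMonoidHom H g).eqLocus (MonoidHom.id H) :=
      iSup_le fun j x hx => hg j x hx
    rw [h1] at h2
    refine eq_of_smul_eq_smul (α := H) fun x => ?_
    rw [one_smul]
    exact h2 (mem_top x)

/-- A finite nilpotent group has a self-centralizing abelian normal subgroup. -/
theorem exists_normal_forall_commute_mem (G : Type*) [Group G] [Finite G] [Group.IsNilpotent G] :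
    ∃ A : Subgroup G, A.Normal ∧ (∀ a ∈ A, ∀ b ∈ A, a * b = b * a) ∧
      ∀ g, (∀ a ∈ A, g * a = a * g) → g ∈ A := by
  obtain ⟨A, -, ⟨hAn, hAc⟩, hmax⟩ := Finite.exists_le_maximal
    (p := fun A : Subgroup G => A.Normal ∧ ∀ a ∈ A, ∀ b ∈ A, a * b = b * a) (a := ⊥)
    ⟨inferInstance, by simp⟩
  refine ⟨A, hAn, hAc, fun g hg => ?_⟩
  have hC : ∀ c : G, c ∈ centralizer (A : Set G) ↔ ∀ a ∈ A, c * a = a * c := fun c =>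
    ⟨fun h a ha => (mem_centralizer_iff.mp h a ha).symm, fun h => mem_centralizer_iff.mpr
      fun a ha => (h a ha).symm⟩
  have key : ∀ k, centralizer (A : Set G) ⊓ Subgroup.upperCentralSeries G k ≤ A := by
    intro k
    induction k with
    | zero => simp
    | succ k ih =>
      rintro c ⟨hcC, hck⟩
      have hcomm : ∀ y : G, c * y * c⁻¹ * y⁻¹ ∈ A := fun y => by
        refine ih ⟨?_, Subgroup.mem_upperCentralSeries_succ_iff.mp hck y⟩
        rw [mul_assoc, mul_assoc, ← mul_assoc y]
        exact mul_mem hcC ((inferInstance : (centralizer (A : Set G)).Normal).conj_mem _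
          (inv_mem hcC) y)
      let B := closure (insert c (A : Set G))
      have hAB : A ≤ B := fun a ha => subset_closure (Set.mem_insert_of_mem c ha)
      have hcB : c ∈ B := subset_closure (Set.mem_insert c _)
      have hBn : B.Normal := by
        suffices h : ∀ g : G, B.map (MulAut.conj g).toMonoidHom ≤ B from
          ⟨fun b hb g => h g ⟨b, hb, rfl⟩⟩
        intro g
        rw [MonoidHom.map_closure, closure_le]
        rintro _ ⟨x, rfl | hx, rfl⟩
        · have h1 := mul_mem (inv_mem (hAB (hcomm g))) hcB
          simpa [mul_assoc] using h1
        · exact hAB (hAn.conj_mem x hx g)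
      have hBc : IsMulCommutative B := isMulCommutative_closure (by
        rintro x (rfl | hx) y (rfl | hy)
        · rfl
        · exact (hC _).mp hcC y hy
        · exact ((hC _).mp hcC x hx).symm
        · exact hAc x hx y hy)
      exact hmax ⟨hBn, fun a ha b hb => setLike_mul_comm ha hb⟩ hAB hcB
  obtain ⟨n, hn⟩ := Group.IsNilpotent.nilpotent G
  exact key n ⟨(hC g).mpr hg, hn ▸ mem_top g⟩

open scoped IsMulCommutative in
theorem isCyclic_of_semiregular {H : Type*} [CommGroup H] [Finite H] [Nontrivial H] {A : Type*}
    [Group A] [Finite A] [MulDistribMulAction A H] (hA : ∀ a b : A, a * b = b * a)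
    (hsr : ∀ a : A, a ≠ 1 → ∀ x : H, x ≠ 1 → a • x ≠ x) : IsCyclic A := by
  let E : A →* AddMonoid.End (Additive H) :=
    (monoidEndToAdditive H).toMonoidHom.comp (MulDistribMulAction.toMonoidEnd A H)
  have hcomm : IsMulCommutative (Subring.closure (Set.range E)) :=
    Subring.isMulCommutative_closure (by
      rintro _ ⟨a, rfl⟩ _ ⟨b, rfl⟩
      rw [← map_mul, hA, map_mul])
  let R := Subring.closure (Set.range E)
  have : Finite (AddMonoid.End (Additive H)) := DFunLike.finite _
  have hn : Nontrivial (AddMonoid.End (Additive H)) := by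
    obtain ⟨x, hx⟩ := exists_ne (1 : H)
    exact ⟨1, 0, fun h => hx (DFunLike.congr_fun h (Additive.ofMul x))⟩
  have : Nontrivial R := ⟨1, 0, fun h =>
    one_ne_zero (α := AddMonoid.End (Additive H)) (congrArg Subtype.val h)⟩
  obtain ⟨m, hm⟩ := Ideal.exists_maximal R
  let F : A →* R := E.codRestrict R fun a => Subring.subset_closure ⟨a, rfl⟩
  let f : A →* R ⧸ m := (Ideal.Quotient.mk m).toMonoidHom.comp F
  refine isCyclic_of_injective_ringHom f ((injective_iff_map_eq_one f).mpr fun a ha => ?_)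
  by_contra ha1
  have h1 : F a - 1 ∈ m := by
    rw [← Ideal.Quotient.eq_zero_iff_mem, map_sub, map_one, sub_eq_zero]
    exact ha
  refine hm.ne_top (Ideal.eq_top_of_isUnit_mem m h1 ?_)
  rw [isUnit_iff_mem_nonZeroDivisors_of_finite, mem_nonZeroDivisors_iff_right]
  intro s hs
  rw [mul_comm] at hs
  refine Subtype.ext (AddMonoidHom.ext fun z => ?_)
  have h2 : a • (s.1 z).toMul / (s.1 z).toMul = 1 :=
    DFunLike.congr_fun (congrArg Subtype.val hs) z
  by_contra hz
  exact hsr a ha1 _ hz (div_eq_one.mp h2)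

theorem mul_conj_pow_eq {G : Type*} [Group G] {a c : G} {m : ℤ} (h : c * a * c⁻¹ = a ^ m) (k : ℕ) :
    (a * c) ^ k = a ^ (∑ i ∈ Finset.range k, m ^ i) * c ^ k := by
  have h' : ∀ s : ℤ, c * a ^ s = a ^ (m * s) * c := fun s => by
    rw [zpow_mul, ← h, conj_zpow, inv_mul_cancel_right]
  induction k with
  | zero => simp
  | succ k ih =>
    rw [pow_succ', ih, geom_sum_succ, add_comm, zpow_one_add, pow_succ', mul_assoc,
      ← mul_assoc c, h']
    simp only [mul_assoc]

theorem two_mul_totient_le {n : ℕ} (hn : Even n) : 2 * n.totient ≤ n := by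
  induction n using Nat.strong_induction_on with
  | _ n ih =>
  obtain ⟨k, rfl⟩ := hn.two_dvd
  rcases Nat.even_or_odd k with hk | hk
  · rcases Nat.eq_zero_or_pos k with rfl | hpos
    · simp
    · rw [Nat.totient_mul_of_prime_of_dvd Nat.prime_two hk.two_dvd]
      exact Nat.mul_le_mul_left 2 (ih k (by omega) hk)
  · rw [Nat.totient_mul (Nat.coprime_two_left.mpr hk), Nat.totient_two, one_mul]
    exact Nat.mul_le_mul_left 2 (Nat.totient_le k)

theorem Subgroup.exists_forall_conj_eq_zpow {G : Type*} [Group G] (A : Subgroup G) [A.Normal]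
    [IsCyclic A] (c : G) : ∃ m : ℤ, ∀ b ∈ A, c * b * c⁻¹ = b ^ m := by
  obtain ⟨m, hm⟩ := MonoidHom.map_cyclic (MulAut.conjNormal c : A ≃* A).toMonoidHom
  refine ⟨m, fun b hb => ?_⟩
  have h := congrArg Subtype.val (hm ⟨b, hb⟩)
  simpa using h

theorem zpow_eq_self_of_conj_eq_zpow {G : Type*} [Group G] {r : ℕ} (hr : r.Prime) (hr2 : Odd r)
    {a c : G} {m : ℤ} (h : c * a * c⁻¹ = a ^ m) (hc : c ^ r = 1) (hac : (a * c) ^ r = 1)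
    {j : ℕ} (ha : a ^ r ^ j = 1) : a ^ m = a := by
  by_cases ha1 : a = 1
  · simp [ha1]
  have : Fact r.Prime := ⟨hr⟩
  obtain ⟨k, -, hk⟩ := (Nat.dvd_prime_pow hr).mp (orderOf_dvd_of_pow_eq_one ha)
  have hconj : ∀ i : ℕ, c ^ i * a * (c ^ i)⁻¹ = a ^ m ^ i := by
    intro i
    induction i with
    | zero => simp
    | succ i ih =>
      rw [pow_succ', mul_inv_rev, pow_succ', zpow_mul, ← h, conj_zpow, ← ih]
      simp only [mul_assoc]
  have h1 : (orderOf a : ℤ) ∣ m ^ r - 1 := by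
    have h2 := hconj r
    rw [hc, one_mul, inv_one, mul_one] at h2
    rw [orderOf_dvd_iff_zpow_eq_one, zpow_sub_one, ← h2, mul_inv_cancel]
  have hk0 : k ≠ 0 := by
    rintro rfl
    exact ha1 (orderOf_eq_one_iff.mp hk)
  have hrm : (r : ℤ) ∣ m - 1 := by
    have h2 : (r : ℤ) ∣ m ^ r - 1 :=
      (Int.natCast_dvd_natCast.mpr (hk ▸ dvd_pow_self r hk0)).trans h1
    rw [← ZMod.intCast_zmod_eq_zero_iff_dvd] at h2 ⊢
    push_cast at h2 ⊢
    rwa [ZMod.pow_card] at h2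
  have hS : (orderOf a : ℤ) ∣ ∑ i ∈ Finset.range r, m ^ i := by
    rw [orderOf_dvd_iff_zpow_eq_one]
    rwa [mul_conj_pow_eq h, hc, mul_one] at hac
  have hdr : orderOf a ∣ r := by
    obtain ⟨b, hb⟩ := hrm
    have h2 := odd_sq_dvd_geom_sum₂_sub (a := (1 : ℤ)) (b := b) hr2
    have h3 : (1 + r * b : ℤ) = m := by rw [← hb]; ring
    simp only [h3, one_pow, mul_one] at h2
    rcases Nat.lt_or_ge k 2 with hk2 | hk2
    · rw [hk, show k = 1 by omega, pow_one]
    · have h4 : (r : ℤ) ^ 2 ∣ ∑ i ∈ Finset.range r, m ^ i := by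
        refine dvd_trans ?_ hS
        rw [hk]
        exact_mod_cast pow_dvd_pow r hk2
      have h5 : (r ^ 2 : ℕ) ∣ r := by
        have h6 := (dvd_sub_right h4).mp h2
        exact_mod_cast h6
      have h6 := Nat.le_of_dvd hr.pos h5
      have h7 := hr.one_lt
      nlinarith
  have h2 : (orderOf a : ℤ) ∣ m - 1 := (Int.natCast_dvd_natCast.mpr hdr).trans hrm
  rwa [orderOf_dvd_iff_zpow_eq_one, zpow_sub_one, mul_inv_eq_one] at h2

theorem commute_conj_of_pow_prime_eq_one {G : Type*} [Group G] [Finite G] [Group.IsNilpotent G]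
    {A : Subgroup G} [A.Normal] [IsCyclic A] (hA : ∀ g, (∀ a ∈ A, g * a = a * g) → g ∈ A)
    {r : ℕ} (hr : r.Prime) (hr2 : Odd r) {c : G} (hc : c ^ r = 1) (n : G) :
    Commute c (n * c * n⁻¹) := by
  have : Fact r.Prime := ⟨hr⟩
  obtain ⟨m, hm⟩ := A.exists_forall_conj_eq_zpow c
  have hAn : A.Normal := inferInstance
  have hm' : ∀ b ∈ A, n * c * n⁻¹ * b * (n * c * n⁻¹)⁻¹ = b ^ m := by
    intro b hb
    have h1 := hm _ (hAn.conj_mem b hb n⁻¹)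
    calc n * c * n⁻¹ * b * (n * c * n⁻¹)⁻¹ = n * (c * (n⁻¹ * b * n⁻¹⁻¹) * c⁻¹) * n⁻¹ := by group
      _ = b ^ m := by rw [h1, conj_zpow]; group
  set a := n * c * n⁻¹ * c⁻¹ with ha
  have haA : a ∈ A := by
    refine hA a fun b hb => ?_
    have hb' := hAn.conj_mem b hb c⁻¹
    have h1 := (hm' _ hb').trans (hm _ hb').symm
    rw [← mul_inv_eq_iff_eq_mul]
    calc a * b * a⁻¹ = n * c * n⁻¹ * (c⁻¹ * b * c⁻¹⁻¹) * (n * c * n⁻¹)⁻¹ := by rw [ha]; group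
      _ = b := by rw [h1]; group
  have hpg : IsPGroup r (zpowers c) := by
    rintro ⟨_, k, rfl⟩
    refine ⟨1, Subtype.ext ?_⟩
    change (c ^ k) ^ r ^ 1 = 1
    rw [pow_one, ← zpow_natCast, zpow_comm, zpow_natCast, hc, one_zpow]
  obtain ⟨P, hP⟩ := hpg.exists_le_sylow
  have hPn : (P : Subgroup G).Normal := inferInstance
  have hcP : c ∈ (P : Subgroup G) := hP (mem_zpowers c)
  obtain ⟨j, hj⟩ := P.isPGroup' ⟨a, mul_mem (hPn.conj_mem c hcP n) (inv_mem hcP)⟩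
  have hac : a * c = n * c * n⁻¹ := inv_mul_cancel_right _ _
  have h1 := zpow_eq_self_of_conj_eq_zpow hr hr2 (hm a haA) hc
    (by rw [hac, conj_pow, hc]; simp) (congrArg Subtype.val hj)
  rw [← hm a haA, mul_inv_eq_iff_eq_mul] at h1
  rw [← hac]
  exact Commute.mul_right h1 rfl

theorem two_mul_card_sq_le_of_inf_eq_bot {G : Type*} [Group G] [Finite G] [Group.IsNilpotent G]
    (hG : Even (Nat.card G)) {A : Subgroup G} [A.Normal] [IsCyclic A]
    (hA : ∀ g, (∀ a ∈ A, g * a = a * g) → g ∈ A) {C : Subgroup G} (hAC : A ⊓ C = ⊥) :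
    2 * Nat.card C ^ 2 ≤ Nat.card G := by
  have hAeven : Even (Nat.card A) := by
    by_contra hodd
    have : Fact (Nat.Prime 2) := ⟨Nat.prime_two⟩
    let P : Sylow 2 G := default
    have hPn : (P : Subgroup G).Normal := inferInstance
    have hdisj : Disjoint (P : Subgroup G) A := by
      obtain ⟨k, hk⟩ := IsPGroup.iff_card.mp P.isPGroup'
      refine disjoint_of_coprime_natCard ?_
      rw [hk]
      exact Nat.Coprime.pow_left k (Nat.coprime_two_left.mpr (Nat.not_even_iff_odd.mp hodd))
    have hPA : (P : Subgroup G) ≤ A := fun g hg => hA g fun a ha =>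
      commute_of_normal_of_disjoint _ _ hPn inferInstance hdisj g a hg ha
    have hP := P.dvd_card_of_dvd_card hG.two_dvd
    rw [disjoint_self.mp (hdisj.mono_right hPA)] at hP
    simp at hP
  have h1 : 2 * Nat.card C ≤ Nat.card A := by
    let f : C →* MulAut A := MulAut.conjNormal.comp C.subtype
    have hf : Function.Injective f := by
      refine (injective_iff_map_eq_one f).mpr fun c hc => ?_
      have h2 : (c : G) ∈ A := hA c fun a ha => by
        have h3 := congrArg Subtype.val (DFunLike.congr_fun hc ⟨a, ha⟩)
        exact mul_inv_eq_iff_eq_mul.mp h3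
      exact Subtype.ext (mem_bot.mp (hAC ▸ mem_inf.mpr ⟨h2, c.2⟩))
    have h2 := Nat.card_le_card_of_injective f hf
    rw [IsCyclic.card_mulAut] at h2
    exact (Nat.mul_le_mul_left 2 h2).trans (two_mul_totient_le hAeven)
  have h2 : Nat.card C ≤ A.index := by
    have h3 : A.relIndex C = Nat.card C := by
      rw [← inf_relIndex_right, hAC, relIndex_bot_left]
    rw [← h3]
    exact Nat.le_of_dvd (Nat.pos_of_ne_zero FiniteIndex.index_ne_zero)
      (relIndex_dvd_index_of_normal A C)
  calc 2 * Nat.card C ^ 2 = 2 * Nat.card C * Nat.card C := by ring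
    _ ≤ Nat.card A * A.index := Nat.mul_le_mul h1 h2
    _ = Nat.card G := A.card_mul_index

theorem stabilizer_eq_bot_of_semiregular {H : Type*} [CommGroup H] {Γ : Type*} [Group Γ] [Finite Γ]
    [Group.IsNilpotent Γ] [MulDistribMulAction Γ H] (hΓ : Odd (Nat.card Γ))
    (hsr : ∀ A : Subgroup Γ, A.Normal → (∀ a ∈ A, ∀ b ∈ A, a * b = b * a) →
      ∀ a ∈ A, a ≠ 1 → ∀ x : H, x ≠ 1 → a • x ≠ x)
    {A : Subgroup Γ} [A.Normal] [IsCyclic A] (hA : ∀ g, (∀ a ∈ A, g * a = a * g) → g ∈ A)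
    {x : H} (hx : x ≠ 1) : stabilizer Γ x = ⊥ := by
  by_contra hne
  have hcard : Nat.card (stabilizer Γ x) ≠ 1 := fun h => hne (card_eq_one.mp h)
  obtain ⟨r, hr, hrC⟩ := Nat.exists_prime_and_dvd hcard
  have : Fact r.Prime := ⟨hr⟩
  have hr2 : Odd r := hΓ.of_dvd_nat (hrC.trans (card_subgroup_dvd_card _))
  obtain ⟨c, hc⟩ := exists_prime_orderOf_dvd_card' r hrC
  rw [← orderOf_coe] at hc
  have hcr : (c : Γ) ^ r = 1 := hc ▸ pow_orderOf_eq_one (c : Γ)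
  have hcomm : IsMulCommutative (normalClosure {(c : Γ)}) := isMulCommutative_closure (by
    intro y hy z hz
    rw [Group.mem_conjugatesOfSet_iff] at hy hz
    obtain ⟨_, rfl, hy⟩ := hy
    obtain ⟨_, rfl, hz⟩ := hz
    obtain ⟨s, rfl⟩ := isConj_iff.mp hy
    obtain ⟨t, rfl⟩ := isConj_iff.mp hz
    have h1 := (commute_conj_of_pow_prime_eq_one hA hr hr2 hcr (s⁻¹ * t)).map (MulAut.conj s)
    have h2 : MulAut.conj s (s⁻¹ * t * (c : Γ) * (s⁻¹ * t)⁻¹) = t * c * t⁻¹ := by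
      rw [MulAut.conj_apply]
      group
    rw [h2] at h1
    exact h1)
  refine hsr _ normalClosure_normal (fun a ha b hb => setLike_mul_comm ha hb) c
    (subset_normalClosure (Set.mem_singleton _)) (fun h => hr.ne_one ?_) x hx c.2
  rw [← hc, h, orderOf_one]

theorem exists_small_stabilizer_of_semiregular {H : Type*} [CommGroup H] [Finite H] [Nontrivial H]
    {Γ : Type*} [Group Γ] [Finite Γ] [Group.IsNilpotent Γ] [Nontrivial Γ] [MulDistribMulAction Γ H]
    {p : ℕ} (hp : 2 ≤ p) (hpΓ : ∀ q : ℕ, q.Prime → q ∣ Nat.card Γ → p ≤ q)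
    (hsr : ∀ A : Subgroup Γ, A.Normal → (∀ a ∈ A, ∀ b ∈ A, a * b = b * a) →
      ∀ a ∈ A, a ≠ 1 → ∀ x : H, x ≠ 1 → a • x ≠ x) :
    ∃ x : H, p * Nat.card (stabilizer Γ x) ^ p ≤ Nat.card Γ := by
  obtain ⟨A, hAn, hAc, hA⟩ := exists_normal_forall_commute_mem Γ
  have hcyc : IsCyclic A := isCyclic_of_semiregular (H := H)
    (fun a b => Subtype.ext (hAc a a.2 b b.2))
    (fun a ha x hx => hsr A hAn hAc a a.2 (fun h => ha (Subtype.ext h)) x hx)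
  obtain ⟨x, hx⟩ := exists_ne (1 : H)
  refine ⟨x, ?_⟩
  rcases Nat.even_or_odd (Nat.card Γ) with h2 | h2
  · obtain rfl : p = 2 := le_antisymm (hpΓ 2 Nat.prime_two h2.two_dvd) hp
    refine two_mul_card_sq_le_of_inf_eq_bot h2 hA ?_
    refine (eq_bot_iff_forall _).mpr fun a ha => ?_
    by_contra ha1
    exact hsr A hAn hAc a ha.1 ha1 x hx ha.2
  · rw [stabilizer_eq_bot_of_semiregular h2 hsr hA hx, card_bot, one_pow, mul_one]
    obtain ⟨q, hq, hqd⟩ := Nat.exists_prime_and_dvd (Finite.one_lt_card (α := Γ)).ne'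
    exact (hpΓ q hq hqd).trans (Nat.le_of_dvd Nat.card_pos hqd)

/-- Every finite group satisfies `HasSmallStabilizer`, by induction on its order. -/
theorem hasSmallStabilizer (n : ℕ) : ∀ (H : Type v) [Group H] [Finite H], Nat.card H = n →
    HasSmallStabilizer H := by
  induction n using Nat.strong_induction_on with
  | _ n ih =>
  intro H _ _ hn
  have ihW : ∀ W : Subgroup H, W ≠ ⊤ → HasSmallStabilizer W := fun W hW =>
    ih _ (hn ▸ lt_of_le_of_ne W.card_le_card_group fun h => hW (W.eq_top_of_card_eq h)) W rfl
  by_cases hH : ∀ q : ℕ, q.Prime → ¬ IsPGroup q H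
  · exact exists_small_stabilizer_of_not_isPGroup ihW hH
  push Not at hH
  obtain ⟨q, hq, hqH⟩ := hH
  have : Fact q.Prime := ⟨hq⟩
  intro Γ _ _ _ _ _ _ p hp hpΓ hco
  have hHn : Nontrivial H := by
    by_contra hs
    have := not_nontrivial_iff_subsingleton.mp hs
    obtain ⟨g, hg⟩ := exists_ne (1 : Γ)
    exact hg (eq_of_smul_eq_smul fun x : H => Subsingleton.elim _ _)
  have hnormal : ∀ K : Subgroup H, K.Normal → (∀ g : Γ, ∀ x ∈ K, g • x ∈ K) → K ≠ ⊥ → K ≠ ⊤ →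
      ∃ x : H, p * Nat.card (stabilizer Γ x) ^ p ≤ Nat.card Γ := by
    intro K _ hK hK1 hK2
    refine exists_small_stabilizer_of_normal hp hpΓ hco hK hK1 hK2 (ihW K hK2) (ih _ ?_ _ rfl)
    rw [← hn, ← K.index_mul_card]
    exact lt_mul_of_one_lt_right (Nat.pos_of_ne_zero FiniteIndex.index_ne_zero)
      (K.one_lt_card_iff_ne_bot.mpr hK1)
  by_cases hZ : center H = ⊤
  · let _ : CommGroup H :=
      { ‹Group H› with mul_comm := fun a b => (mem_center_iff.mp (hZ ▸ mem_top b) a) }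
    by_cases hirr : ∀ W : Subgroup H, (∀ g : Γ, ∀ x ∈ W, g • x ∈ W) → W = ⊥ ∨ W = ⊤
    · by_cases hsr : ∀ A : Subgroup Γ, A.Normal → (∀ a ∈ A, ∀ b ∈ A, a * b = b * a) →
        ∀ a ∈ A, a ≠ 1 → ∀ x : H, x ≠ 1 → a • x ≠ x
      · exact exists_small_stabilizer_of_semiregular hp hpΓ hsr
      · push Not at hsr
        obtain ⟨A, _, hA, a, ha, ha1, x, hx1, hax⟩ := hsr
        exact exists_small_stabilizer_of_not_semiregular ihW hp hpΓ hco hirr hA ha ha1 hx1 hax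
    · push Not at hirr
      obtain ⟨W, hW, hW1, hW2⟩ := hirr
      exact hnormal W inferInstance hW hW1 hW2
  · refine hnormal (center H) inferInstance (fun g x hx => ?_) ?_ hZ
    · rw [mem_center_iff] at hx ⊢
      intro y
      have h := congrArg (g • ·) (hx (g⁻¹ • y))
      simpa only [smul_mul', smul_inv_smul] using h
    · have := hqH.center_nontrivial
      exact (nontrivial_iff_ne_bot _).mp this

/-- Isaacs: if a nontrivial nilpotent `π`-group `N` acts faithfully by automorphisms on a
`π'`-group `H`, and `p` is the smallest member of `π`, then some `x ∈ H` has
`|C_N(x)| ≤ (|N|/p)^(1/p)`. -/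
theorem exists_small_centralizer_of_coprime_action
    {N H : Type*} [Group N] [Finite N] [Group H] [Finite H]
    [MulDistribMulAction N H] (hfaithful : FaithfulSMul N H)
    (π : Set ℕ) (hπ : ∀ q ∈ π, Nat.Prime q)
    (hN : Nontrivial N) (hNπ : ∀ q : ℕ, q.Prime → q ∣ Nat.card N → q ∈ π)
    (hHπ : ∀ q : ℕ, q.Prime → q ∣ Nat.card H → q ∉ π)
    (hnil : Group.IsNilpotent N)
    (p : ℕ) (hpπ : p ∈ π) (hpmin : ∀ q ∈ π, p ≤ q) :
    ∃ x : H, (Nat.card (MulAction.stabilizer N x) : ℝ) ≤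
      ((Nat.card N : ℝ) / p) ^ ((1 : ℝ) / p) := by
  have hp := hπ p hpπ
  have hp0 : (0 : ℝ) < p := Nat.cast_pos.mpr hp.pos
  have hpN : ∀ q : ℕ, q.Prime → q ∣ Nat.card N → p ≤ q := fun q hq hd => hpmin q (hNπ q hq hd)
  have hco : (Nat.card N).Coprime (Nat.card H) :=
    Nat.coprime_of_dvd fun q hq hN hH => hHπ q hq hH (hNπ q hq hN)
  obtain ⟨x, hx⟩ : ∃ x : H, p * Nat.card (MulAction.stabilizer N x) ^ p ≤ Nat.card N := by
    rcases (hasSmallStabilizer _ H rfl).exists_range hp.two_le hpN hco with h | ⟨x, -, hx⟩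
    · obtain ⟨g, hg⟩ := exists_ne (1 : N)
      exact absurd (eq_of_smul_eq_smul fun x : H => (h g x).trans (one_smul N x).symm) hg
    · have hker : (MulDistribMulAction.toMulAut N H).ker = ⊥ :=
        (eq_bot_iff_forall _).mpr fun g hg => eq_of_smul_eq_smul fun x : H =>
          (DFunLike.congr_fun (MonoidHom.mem_ker.mp hg) x).trans (one_smul N x).symm
      rw [hker, card_bot, one_pow, mul_one] at hx
      exact ⟨x, hx⟩
  refine ⟨x, ?_⟩
  rw [one_div, Real.le_rpow_inv_iff_of_pos (Nat.cast_nonneg _) (by positivity) hp0,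
    Real.rpow_natCast, le_div_iff₀' hp0]
  exact_mod_cast hx
end

section
/- Let G be a finite group with a normal r-subgroup N contained in the Frattini subgroup Φ(G), where r is a prime not in the prime set π. If O_π(G/N) > 1 then O_π(G) > 1. Consequently, if O_π(G) = 1 and Φ(G) > 1 contains a minimal normal r-subgroup N with r ∉ π, then O_π(G/N) = 1. -/
namespace Subgroup

/-- Complements of an abelian normal Hall subgroup are conjugate. -/
theorem IsComplement'.exists_conj_eq_of_coprime {M : Type*} [Group M] [Finite M]
    {N H K : Subgroup M} [N.Normal] [IsMulCommutative N]
    (hN : (Nat.card N).Coprime N.index) (hH : IsComplement' N H) (hK : IsComplement' N K) :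
    ∃ n : M, H.map (MulAut.conj n).toMonoidHom = K := by
  have key : ∀ T : Subgroup M, IsComplement' N T →
      ∃ α : N.QuotientDiff, MulAction.stabilizer M α = T := by
    intro T hT
    let S : N.LeftTransversal := ⟨(T : Set M), hT.symm⟩
    let α : N.QuotientDiff := Quotient.mk'' S
    refine ⟨α, ?_⟩
    have hle : T ≤ MulAction.stabilizer M α := by
      intro t ht
      rw [MulAction.mem_stabilizer_iff]
      have hS : MulOpposite.op t⁻¹ • S = S :=
        Subtype.ext (op_smul_coe_set (T.inv_mem ht))
      exact congrArg Quotient.mk'' hS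
    refine (eq_of_le_of_card_ge hle ?_).symm
    have h1 := (isComplement'_stabilizer_of_coprime (α := α) hN).card_mul_card
    have h2 := hT.card_mul_card
    exact (Nat.eq_of_mul_eq_mul_left Nat.card_pos (h1.trans h2.symm)).le
  obtain ⟨α, rfl⟩ := key H hH
  obtain ⟨β, rfl⟩ := key K hK
  obtain ⟨n, hn⟩ := exists_smul_eq hN α β
  refine ⟨n, ?_⟩
  rw [← hn]
  exact (MulAction.stabilizer_smul_eq_stabilizer_map_conj (n : M) α).symm

theorem normal_of_normalizer_sup_eq_top {G : Type*} [Group G] [Finite G] {N K : Subgroup G}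
    (hN : N ≤ frattini G) (h : normalizer (K : Set G) ⊔ N = ⊤) : K.Normal :=
  normalizer_eq_top_iff.mp
    (frattini_nongenerating (top_le_iff.mp (h.ge.trans (sup_le_sup_left hN _))))

/-- If `N ≤ L` are normal with `N` an abelian Hall subgroup of `L` contained in the Frattini
subgroup of `G`, then `N` has a complement in `L` which is normal in `G`. -/
theorem exists_normal_complement_of_le_frattini_of_isMulCommutative
    {G : Type*} [Group G] [Finite G] (N L : Subgroup G) [N.Normal] [L.Normal]
    [IsMulCommutative N] (hNL : N ≤ L) (hN : N ≤ frattini G)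
    (hc : (Nat.card N).Coprime (N.relIndex L)) :
    ∃ K : Subgroup G, K.Normal ∧ K ⊓ N = ⊥ ∧ K ⊔ N = L := by
  have hcard : Nat.card (N.subgroupOf L) = Nat.card N :=
    Nat.card_congr (subgroupOfEquivOfLe hNL).toEquiv
  have hc' : (Nat.card (N.subgroupOf L)).Coprime (N.subgroupOf L).index := by
    rwa [hcard]
  obtain ⟨H, hH⟩ := exists_right_complement'_of_coprime hc'
  have hmapN : (N.subgroupOf L).map L.subtype = N := map_subgroupOf_eq_of_le hNL
  have hinf : H.map L.subtype ⊓ N = ⊥ := by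
    rw [← hmapN, ← map_inf_eq _ _ _ L.subtype_injective, hH.symm.disjoint.eq_bot, map_bot]
  have hsup : H.map L.subtype ⊔ N = L := by
    rw [← hmapN, ← map_sup, hH.symm.sup_eq_top, ← MonoidHom.range_eq_map, range_subtype]
  refine ⟨H.map L.subtype, normal_of_normalizer_sup_eq_top hN ?_, hinf, hsup⟩
  have hL : L ≤ normalizer (H.map L.subtype : Set G) ⊔ N :=
    hsup.ge.trans (sup_le_sup_right le_normalizer N)
  refine top_le_iff.mp fun g _ => ?_
  let φ : L ≃* L := MulAut.conjNormal g
  have hφ : Function.Injective φ.toMonoidHom := φ.injective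
  have hφN : (N.subgroupOf L).map φ.toMonoidHom = N.subgroupOf L := by
    refine eq_of_le_of_card_ge ?_ (card_map_of_injective hφ).ge
    rintro _ ⟨x, hx, rfl⟩
    exact ‹N.Normal›.conj_mem _ hx g
  have hφH : IsComplement' (N.subgroupOf L) (H.map φ.toMonoidHom) := by
    refine isComplement'_of_card_mul_and_disjoint ?_ ?_
    · rw [card_map_of_injective hφ]
      exact hH.card_mul_card
    · rw [disjoint_iff, ← hφN, ← map_inf_eq _ _ _ hφ, hH.disjoint.eq_bot, map_bot]
  obtain ⟨n, hn⟩ := hφH.exists_conj_eq_of_coprime hc' hH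
  have hng : (n : G) * g ∈ normalizer (H.map L.subtype : Set G) := by
    refine mem_normalizer_fintype ?_
    rintro _ ⟨x, hx, rfl⟩
    refine ⟨MulAut.conj n (φ x), hn.le ⟨φ x, ⟨x, hx, rfl⟩, rfl⟩, ?_⟩
    simp [φ, mul_assoc]
  have := mul_mem (inv_mem (hL n.2)) (mem_sup_left (T := N) hng)
  rwa [inv_mul_cancel_left] at this

theorem relIndex_eq_of_sup_eq {G : Type*} [Group G] {N K L : Subgroup G} [N.Normal]
    (h : K ⊔ N = L) : N.relIndex L = (K ⊓ N).relIndex K := by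
  rw [← h, relIndex_sup_right, inf_relIndex_left]

/-- If `N ≤ L` are normal with `N` a `p`-subgroup contained in the Frattini subgroup of `G` and
a Hall subgroup of `L`, then `N` has a complement in `L` which is normal in `G`. -/
theorem exists_normal_complement_of_le_frattini {p : ℕ} [Fact p.Prime]
    {G : Type*} [Group G] [Finite G] (N L : Subgroup G) [N.Normal] [L.Normal]
    (hp : IsPGroup p N) (hNL : N ≤ L) (hN : N ≤ frattini G)
    (hc : (Nat.card N).Coprime (N.relIndex L)) :
    ∃ K : Subgroup G, K.Normal ∧ K ⊓ N = ⊥ ∧ K ⊔ N = L := by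
  induction hn : Nat.card N using Nat.strong_induction_on generalizing G with
  | _ n ih =>
  subst hn
  rcases subsingleton_or_nontrivial N with hs | hs
  · have : N = ⊥ := (eq_bot_iff_forall _).mpr fun x hx =>
      congrArg Subtype.val (Subsingleton.elim (⟨x, hx⟩ : N) 1)
    subst this
    exact ⟨L, ‹_›, inf_bot_eq L, sup_bot_eq L⟩
  let Z : Subgroup G := (center N).map N.subtype
  have hZN : Z ≤ N := map_subtype_le _
  have hZn : Z.Normal := inferInstance
  have hZ1 : Nat.card Z ≠ 1 := by
    rw [card_map_of_injective N.subtype_injective, Ne, card_eq_one]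
    exact hp.bot_lt_center.ne'
  let f := QuotientGroup.mk' Z
  have hf : Function.Surjective f := QuotientGroup.mk'_surjective Z
  have hker : f.ker = Z := QuotientGroup.ker_mk' Z
  have hcm : ∀ A : Subgroup G, Z ≤ A → (A.map f).comap f = A := fun A hA =>
    comap_map_eq_self (hker.le.trans hA)
  have := ‹N.Normal›.map f hf
  have := ‹L.Normal›.map f hf
  have hcard : Nat.card (N.map f) * Nat.card Z = Nat.card N := by
    have h := relIndex_mul_relIndex ⊥ Z N bot_le hZN
    rw [← relIndex_ker N f, hker, mul_comm, ← relIndex_bot_left Z, ← relIndex_bot_left N]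
    exact h
  have hrel : (N.map f).relIndex (L.map f) = N.relIndex L := by
    rw [← relIndex_comap, hcm N hZN]
  have hlt : Nat.card (N.map f) < Nat.card N := by
    have h1 : 0 < Nat.card Z := Nat.card_pos
    have h2 : 0 < Nat.card (N.map f) := Nat.card_pos
    nlinarith [show 2 ≤ Nat.card Z by omega]
  obtain ⟨K', hK'n, hK'i, hK's⟩ := ih _ hlt (N.map f) (L.map f) (hp.map f) (map_mono hNL)
    (map_le_iff_le_comap.mpr (hN.trans (frattini_le_comap_frattini_of_surjective hf)))
    (by rw [hrel]; exact hc.coprime_dvd_left ⟨_, hcard.symm⟩) rfl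
  have hZK : Z ≤ K'.comap f := hker.ge.trans (comap_mono bot_le)
  have hinf : K'.comap f ⊓ N = Z := by
    rw [← hcm N hZN, ← comap_inf, hK'i, MonoidHom.comap_bot, hker]
  have hsup : K'.comap f ⊔ N = L := by
    rw [← hcm L (hZN.trans hNL), ← hK's, ← comap_sup_eq _ _ _ hf, hcm N hZN]
  have hKn := hK'n.comap f
  obtain ⟨K, hKn, hKi, hKs⟩ := exists_normal_complement_of_le_frattini_of_isMulCommutative
    Z (K'.comap f) hZK (hZN.trans hN) (by
      have hrelZ := relIndex_eq_of_sup_eq hsup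
      rw [hinf] at hrelZ
      rw [← hrelZ]
      exact hc.coprime_dvd_left (card_dvd_of_le hZN))
  have hKK : K ≤ K'.comap f := le_sup_left.trans hKs.le
  refine ⟨K, hKn, ?_, ?_⟩
  · rw [← hKi, ← hinf, ← inf_assoc, inf_eq_left.mpr hKK]
  · rw [← hsup, ← hKs, sup_assoc, sup_eq_right.mpr hZN]

end Subgroup

/-- Let `N` be a normal `r`-subgroup of the finite group `G` contained in the Frattini
subgroup, where `r` is a prime not in `π`. If `O_π(G) = 1` then `O_π(G/N) = 1`
(equivalently, if `O_π(G/N) > 1` then `O_π(G) > 1`). -/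
theorem Oπ_quotient_trivial_of_frattini
    (G : Type*) [Group G] [Finite G] (π : Set ℕ) (hπ : ∀ q ∈ π, Nat.Prime q)
    (r : ℕ) (hr : r.Prime) (hrπ : r ∉ π)
    (N : Subgroup G) [N.Normal] (hNr : IsPGroup r N) (hNfr : N ≤ frattini G)
    (hOπ : ∀ K : Subgroup G, K.Normal →
      (∀ q : ℕ, q.Prime → q ∣ Nat.card K → q ∈ π) → K = ⊥) :
    ∀ K : Subgroup (G ⧸ N), K.Normal →
      (∀ q : ℕ, q.Prime → q ∣ Nat.card K → q ∈ π) → K = ⊥ := by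
  intro K hK hKπ
  have := Fact.mk hr
  let f := QuotientGroup.mk' N
  have hf : Function.Surjective f := QuotientGroup.mk'_surjective N
  have hker : f.ker = N := QuotientGroup.ker_mk' N
  have hNL : N ≤ K.comap f := hker.ge.trans (Subgroup.comap_mono bot_le)
  have hLn := hK.comap f
  have hrel : N.relIndex (K.comap f) = Nat.card K := by
    have h := Subgroup.relIndex_ker (K.comap f) f
    rwa [hker, Subgroup.map_comap_eq_self_of_surjective hf] at h
  have hc : (Nat.card N).Coprime (N.relIndex (K.comap f)) := by
    obtain ⟨n, hn⟩ := IsPGroup.iff_card.mp hNr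
    rw [hrel, hn]
    exact ((hr.coprime_iff_not_dvd).mpr fun h => hrπ (hKπ r hr h)).pow_left n
  obtain ⟨H, hHn, hHi, hHs⟩ :=
    Subgroup.exists_normal_complement_of_le_frattini N (K.comap f) hNr hNL hNfr hc
  have hcard : Nat.card H = Nat.card K := by
    rw [← hrel, Subgroup.relIndex_eq_of_sup_eq hHs, hHi, Subgroup.relIndex_bot_left]
  rw [← Subgroup.card_eq_one, ← hcard, Subgroup.card_eq_one]
  exact hOπ H hHn (hcard ▸ hKπ)
end
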